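/- arXiv:2007.08079 — 3 statements merged into one kernel-verified Lean document; each statement's English description precedes it below -/
import Mathlib

section
/- Let n ≥ 3 and 1 ≤ k ≤ n−1 with 2k ≠ n. For t > 0 and 1 ≤ m ≤ n−1 define J_m(t) = t^m · ∫_{S^{n-1}} ( t^{−2n}(θ₁² + ⋯ + θ_m²) + θ_{m+1}² + ⋯ + θₙ² )^{1/2} dθ (spherical Lebesgue measure). If a, b > 0 satisfy J_k(a) = J_k(b) and J_{n−k}(a) = J_{n−k}(b), then a = b. (Equivalently: two ellipsoids of revolution in ℝⁿ with equal volumes and equal intrinsic volumes V_k and V_{n−k}, k ≠ n/2, are congruent.) -/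
open MeasureTheory Real Set

noncomputable def sphereMeasure (n : ℕ) :
    Measure (Metric.sphere (0 : EuclideanSpace ℝ (Fin n)) 1) :=
  (volume : Measure (EuclideanSpace ℝ (Fin n))).toSphere

/-- `J_m(t) = t^m ∫_{S^{n-1}} ( t^{-2n}(θ₁²+⋯+θ_m²) + θ_{m+1}²+⋯+θₙ² )^{1/2} dθ`;
up to a constant, the `m`-th intrinsic volume of the ellipsoid of revolution with
semiaxes `(t,…,t,t^{1-n})`. -/
noncomputable def Jfun (n m : ℕ) (t : ℝ) : ℝ :=
  t ^ m * ∫ θ : Metric.sphere (0 : EuclideanSpace ℝ (Fin n)) 1,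
    Real.sqrt (∑ j : Fin n, (if (j : ℕ) < m then (t ^ (2 * n))⁻¹ else 1) *
      ((θ : EuclideanSpace ℝ (Fin n)) j) ^ 2) ∂(sphereMeasure n)

lemma aux_C : ∃ C : ENNReal, ∀ y : ℝ, 0 ≤ y →
    ∫⁻ u : ℝ, ENNReal.ofReal (Real.exp (-u/2) * (1 - Real.exp (-(Real.exp u * (π * y)))))
      = ENNReal.ofReal (Real.sqrt y) * C := by
  refine ⟨∫⁻ u : ℝ, ENNReal.ofReal (Real.exp (-u/2) * (1 - Real.exp (-(Real.exp u * π)))), ?_⟩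
  intro y hy
  rcases hy.eq_or_lt with rfl | hy
  · simp
  obtain ⟨v, rfl⟩ : ∃ v, y = Real.exp v := ⟨Real.log y, (Real.exp_log hy).symm⟩
  rw [← lintegral_add_right_eq_self
    (fun u : ℝ => ENNReal.ofReal (Real.exp (-u/2) * (1 - Real.exp (-(Real.exp u * π))))) v,
    ← lintegral_const_mul _ (by fun_prop)]
  congr 1
  ext u
  rw [← ENNReal.ofReal_mul (by positivity), ← Real.exp_half, ← mul_assoc (Real.exp (v/2)),
    ← Real.exp_add, Real.exp_add u v]
  congr 3
  · ring_nf
  · ring_nf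

lemma gauss_aux (n : ℕ) (b : Fin n → ℝ) (hb : ∀ j, 0 < b j) :
    Integrable (fun x : EuclideanSpace ℝ (Fin n) => Real.exp (-(π * ∑ j, b j * x j ^ 2))) ∧
    ∫ x : EuclideanSpace ℝ (Fin n), Real.exp (-(π * ∑ j, b j * x j ^ 2))
      = ∏ j, Real.sqrt (1 / b j) := by
  have e : ∀ x : Fin n → ℝ, Real.exp (-(π * ∑ j, b j * x j ^ 2))
      = ∏ j, Real.exp (-(π * b j) * x j ^ 2) := by
    intro x
    rw [← Real.exp_sum]
    congr 1
    rw [Finset.mul_sum, ← Finset.sum_neg_distrib]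
    exact Finset.sum_congr rfl fun j _ => by ring
  constructor
  · rw [← (PiLp.volume_preserving_toLp (Fin n)).integrable_comp_emb
      (MeasurableEquiv.toLp 2 (Fin n → ℝ)).measurableEmbedding]
    simp only [Function.comp_def, e]
    exact Integrable.fintype_prod (f := fun j (x : ℝ) => Real.exp (-(π * b j) * x ^ 2))
      (fun j => integrable_exp_neg_mul_sq (mul_pos Real.pi_pos (hb j)))
  · rw [← (PiLp.volume_preserving_toLp (Fin n)).integral_comp
      (MeasurableEquiv.toLp 2 (Fin n → ℝ)).measurableEmbedding]
    simp only [e]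
    rw [integral_fintype_prod_volume_eq_prod (fun j (x : ℝ) => Real.exp (-(π * b j) * x ^ 2))]
    refine Finset.prod_congr rfl fun j _ => ?_
    rw [integral_gaussian]
    congr 1
    have := hb j
    field_simp

lemma gauss_diff (n : ℕ) (w : Fin n → ℝ) (hw : ∀ j, 0 < w j) (u : ℝ) :
    ∫⁻ x : EuclideanSpace ℝ (Fin n), ENNReal.ofReal
      ((1 - Real.exp (-(Real.exp u * (π * ∑ j, w j * x j ^ 2)))) *
        Real.exp (-(π * ‖x‖ ^ 2))) =
      ENNReal.ofReal (1 - ∏ j, Real.sqrt (1 / (1 + Real.exp u * w j))) := by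
  have h1 := gauss_aux n (fun _ => 1) (fun _ => one_pos)
  have h2 := gauss_aux n (fun j => 1 + Real.exp u * w j) (fun j => by have := hw j; positivity)
  have e : ∀ x : EuclideanSpace ℝ (Fin n), (1 - Real.exp (-(Real.exp u * (π * ∑ j, w j * x j ^ 2)))) *
        Real.exp (-(π * ‖x‖ ^ 2)) = Real.exp (-(π * ∑ j, 1 * x j ^ 2)) -
          Real.exp (-(π * ∑ j, (1 + Real.exp u * w j) * x j ^ 2)) := by
    intro x
    rw [sub_mul, one_mul, ← Real.exp_add, EuclideanSpace.real_norm_sq_eq]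
    simp only [one_mul, add_mul, Finset.sum_add_distrib, mul_assoc, ← Finset.mul_sum]
    congr 2
    ring
  rw [← ofReal_integral_eq_lintegral_ofReal]
  · simp only [e]
    rw [integral_sub h1.1 h2.1, h1.2, h2.2]
    simp
  · simp only [e]
    exact h1.1.sub h2.1
  · refine Filter.Eventually.of_forall fun x => ?_
    refine mul_nonneg ?_ (Real.exp_pos _).le
    rw [sub_nonneg]
    apply Real.exp_le_one_iff.2
    rw [neg_nonpos]
    have : 0 ≤ ∑ j, w j * x j ^ 2 := Finset.sum_nonneg fun j _ => mul_nonneg (hw j).le (sq_nonneg _)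
    positivity

lemma polar_aux (n : ℕ) (hn : 3 ≤ n) : ∃ R : ENNReal, ∀ w : Fin n → ℝ, (∀ j, 0 < w j) →
    ∫⁻ x : EuclideanSpace ℝ (Fin n), ENNReal.ofReal
      (Real.sqrt (∑ j, w j * x j ^ 2)) * ENNReal.ofReal (Real.exp (-(π * ‖x‖ ^ 2)))
    = (∫⁻ θ : Metric.sphere (0 : EuclideanSpace ℝ (Fin n)) 1, ENNReal.ofReal
      (Real.sqrt (∑ j, w j * (θ : EuclideanSpace ℝ (Fin n)) j ^ 2)) ∂(sphereMeasure n)) * R := by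
  refine ⟨∫⁻ r : Ioi (0:ℝ), ENNReal.ofReal (r.1 * Real.exp (-(π * r.1 ^ 2)))
    ∂(Measure.volumeIoiPow (Module.finrank ℝ (EuclideanSpace ℝ (Fin n)) - 1)), ?_⟩
  intro w hw
  have : Nonempty (Fin n) := ⟨⟨0, by omega⟩⟩
  rw [sphereMeasure, ← lintegral_prod_mul (by fun_prop) (by fun_prop),
    ← (Measure.measurePreserving_homeomorphUnitSphereProd
      (volume : Measure (EuclideanSpace ℝ (Fin n)))).lintegral_comp_emb
      (Homeomorph.measurableEmbedding _)]
  conv_lhs =>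
    rw [← restrict_compl_singleton (μ := (volume : Measure (EuclideanSpace ℝ (Fin n)))) 0,
      ← lintegral_subtype_comap (measurableSet_singleton _).compl]
  refine lintegral_congr fun x => ?_
  · have hx : (x : EuclideanSpace ℝ (Fin n)) ≠ 0 := x.2
    have hx' : 0 < ‖(x : EuclideanSpace ℝ (Fin n))‖ := norm_pos_iff.2 hx
    simp only [homeomorphUnitSphereProd_apply_snd_coe, homeomorphUnitSphereProd_apply_fst_coe]
    have : ∑ j, w j * (x : EuclideanSpace ℝ (Fin n)) j ^ 2 = ‖(x : EuclideanSpace ℝ (Fin n))‖ ^ 2 *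
      ∑ j, w j * (‖(x : EuclideanSpace ℝ (Fin n))‖⁻¹ • (x : EuclideanSpace ℝ (Fin n))) j ^ 2 := by
      rw [Finset.mul_sum]
      refine Finset.sum_congr rfl fun j _ => ?_
      simp only [PiLp.smul_apply, smul_eq_mul]
      field_simp
    rw [this, Real.sqrt_mul (by positivity), Real.sqrt_sq hx'.le, ENNReal.ofReal_mul hx'.le,
      ENNReal.ofReal_mul hx'.le]
    ring

lemma bridge (n : ℕ) (hn : 3 ≤ n) : ∃ K : ENNReal, ∀ w : Fin n → ℝ, (∀ j, 0 < w j) →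
    (∫⁻ θ : Metric.sphere (0 : EuclideanSpace ℝ (Fin n)) 1, ENNReal.ofReal
      (Real.sqrt (∑ j, w j * (θ : EuclideanSpace ℝ (Fin n)) j ^ 2)) ∂(sphereMeasure n)) * K
    = ∫⁻ u : ℝ, ENNReal.ofReal
      (Real.exp (-u/2) * (1 - ∏ j, Real.sqrt (1 / (1 + Real.exp u * w j)))) := by
  obtain ⟨C, hC⟩ := aux_C
  obtain ⟨R, hR⟩ := polar_aux n hn
  refine ⟨R * C, fun w hw => ?_⟩
  rw [← mul_assoc, ← hR w hw, ← lintegral_mul_const _ (by fun_prop)]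
  have hq : ∀ x : EuclideanSpace ℝ (Fin n), 0 ≤ ∑ j, w j * x j ^ 2 := fun x =>
    Finset.sum_nonneg fun j _ => mul_nonneg (hw j).le (sq_nonneg _)
  have e1 : ∀ x : EuclideanSpace ℝ (Fin n), ENNReal.ofReal
      (Real.sqrt (∑ j, w j * x j ^ 2)) * ENNReal.ofReal (Real.exp (-(π * ‖x‖ ^ 2))) * C =
      ∫⁻ u : ℝ, ENNReal.ofReal (Real.exp (-u/2)) * ENNReal.ofReal
      ((1 - Real.exp (-(Real.exp u * (π * ∑ j, w j * x j ^ 2)))) *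
        Real.exp (-(π * ‖x‖ ^ 2))) := by
    intro x
    rw [mul_right_comm, ← hC _ (hq x), ← lintegral_mul_const _ (by fun_prop)]
    congr 1
    ext u
    rw [← ENNReal.ofReal_mul' (Real.exp_pos _).le, ← ENNReal.ofReal_mul (Real.exp_pos _).le, mul_assoc]
  simp only [e1]
  rw [lintegral_lintegral_swap (by fun_prop)]
  congr 1
  ext u
  rw [lintegral_const_mul _ (by fun_prop), gauss_diff n w hw, ENNReal.ofReal_mul (Real.exp_pos _).le]

/-- softplus -/
noncomputable def sp (u : ℝ) : ℝ := Real.log (1 + Real.exp u)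

lemma sp_pos (u : ℝ) : 0 < sp u := Real.log_pos (by linarith [Real.exp_pos u])

lemma sp_le (u : ℝ) : sp u ≤ Real.exp u := by
  have := Real.log_le_sub_one_of_pos (show 0 < 1 + Real.exp u by positivity)
  unfold sp; linarith

lemma sp_cont : Continuous sp := by
  unfold sp
  exact Continuous.log (by fun_prop) (fun u => by positivity)

lemma sp_neg (u : ℝ) : sp (-u) = sp u - u := by
  unfold sp
  rw [eq_sub_iff_add_eq, ← Real.log_exp u, ← Real.log_mul (by positivity) (by positivity),
    Real.log_exp, Real.exp_neg]
  congr 1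
  have := Real.exp_pos u
  field_simp
  ring

lemma sp_deriv (u : ℝ) : HasDerivAt sp (1 - 1 / (1 + Real.exp u)) u := by
  have h := ((Real.hasDerivAt_exp u).const_add 1).log (by positivity)
  refine h.congr_deriv ?_
  have := Real.exp_pos u
  field_simp
  ring

noncomputable def LL (k m x u : ℝ) : ℝ := k * sp (u - 2 * m * x) + m * sp (u + 2 * k * x)

lemma LL_neg (k m x u : ℝ) : LL k m x (-u) = LL k m (-x) u - (k + m) * u := by
  unfold LL
  rw [show -u - 2 * m * x = -(u - 2 * m * -x) by ring, show -u + 2 * k * x = -(u + 2 * k * -x) by ring,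
    sp_neg, sp_neg]
  ring

lemma LL_pos {k m : ℝ} (hk : 0 < k) (hm : 0 < m) (x u : ℝ) : 0 < LL k m x u := by
  unfold LL
  have := sp_pos (u - 2 * m * x)
  have := sp_pos (u + 2 * k * x)
  positivity

lemma LL_mono {k m : ℝ} (hk : 0 < k) (hm : 0 < m) (u : ℝ) :
    StrictMonoOn (fun x => LL k m x u) (Ici 0) := by
  have hd : ∀ x, HasDerivAt (fun x => LL k m x u)
      (2 * k * m * (1 / (1 + Real.exp (u - 2 * m * x)) - 1 / (1 + Real.exp (u + 2 * k * x)))) x := by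
    intro x
    have a1 : HasDerivAt (fun x => u - 2 * m * x) (- (2 * m)) x := by
      simpa using ((hasDerivAt_id x).const_mul (2 * m)).const_sub u
    have a2 : HasDerivAt (fun x => u + 2 * k * x) (2 * k) x := by
      simpa using ((hasDerivAt_id x).const_mul (2 * k)).const_add u
    have := (((sp_deriv _).comp x a1).const_mul k).add (((sp_deriv _).comp x a2).const_mul m)
    refine this.congr_deriv ?_
    ring
  refine strictMonoOn_of_deriv_pos (convex_Ici 0)
    (fun x _ => (hd x).continuousAt.continuousWithinAt) ?_
  intro x hx
  rw [interior_Ici, mem_Ioi] at hx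
  rw [(hd x).deriv]
  have : 1 / (1 + Real.exp (u + 2 * k * x)) < 1 / (1 + Real.exp (u - 2 * m * x)) := by
    apply one_div_lt_one_div_of_lt (by positivity)
    have : Real.exp (u - 2 * m * x) < Real.exp (u + 2 * k * x) := by
      apply Real.exp_lt_exp.2
      have := mul_pos hk hx
      have := mul_pos hm hx
      linarith
    linarith
  have := sub_pos.2 this
  positivity

/-- slope inequality -/
lemma slope_aux {y p r : ℝ} (hy : 0 < y) (hr : 0 < r) (hrp : r < p) :
    (sp (-y + r) - sp (-y - r)) / r < (sp (-y + p) - sp (-y - p)) / p := by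
  have hd : ∀ x, HasDerivAt (fun x => sp (-y + x) - sp (-y - x))
      (1 - Real.sinh y / (Real.cosh y + Real.cosh x)) x := by
    intro x
    have a1 : HasDerivAt (fun x => -y + x) 1 x := by
      simpa using (hasDerivAt_id x).const_add (-y)
    have a2 : HasDerivAt (fun x => -y - x) (-1) x := by
      simpa using (hasDerivAt_id x).const_sub (-y)
    have := ((sp_deriv _).comp x a1).sub ((sp_deriv _).comp x a2)
    refine this.congr_deriv ?_
    rw [Real.sinh_eq, Real.cosh_eq, Real.cosh_eq]
    simp only [Real.exp_add, sub_eq_add_neg, Real.exp_neg]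
    have := Real.exp_pos y
    have := Real.exp_pos x
    field_simp
    ring
  have hc : StrictConvexOn ℝ (Ici 0) (fun x => sp (-y + x) - sp (-y - x)) := by
    refine StrictMonoOn.strictConvexOn_of_deriv (convex_Ici 0)
      (fun x _ => (hd x).continuousAt.continuousWithinAt) ?_
    rw [interior_Ici]
    intro a ha b hb hab
    rw [(hd a).deriv, (hd b).deriv]
    have : Real.cosh a < Real.cosh b := Real.cosh_strictMonoOn (Ioi_subset_Ici_self ha) (Ioi_subset_Ici_self hb) hab
    have : Real.sinh y / (Real.cosh y + Real.cosh b) < Real.sinh y / (Real.cosh y + Real.cosh a) := by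
      apply div_lt_div_of_pos_left (Real.sinh_pos_iff.2 hy)
      · have := Real.cosh_pos y; have := Real.cosh_pos a; positivity
      · linarith
    linarith
  have := hc.slope_strict_mono_adjacent (x := 0) (y := r) (z := p) (by simp) (by simp; linarith) hr hrp
  simp only [add_zero, sub_zero, sub_self] at this
  set A := sp (-y + r) - sp (-y - r)
  set B := sp (-y + p) - sp (-y - p)
  rw [div_lt_div_iff₀ hr (by linarith)] at this
  rw [div_lt_div_iff₀ hr (by linarith)]
  nlinarith

lemma LL_lt {k m : ℝ} (hk : 0 < k) (hkm : k < m) {x u : ℝ} (hx : 0 < x) (hu : u < 0) :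
    LL k m x u < LL k m (-x) u := by
  have hm : 0 < m := hk.trans hkm
  have h := slope_aux (y := -u) (r := 2 * k * x) (p := 2 * m * x) (by linarith) (by positivity)
    (by nlinarith)
  unfold LL
  rw [div_lt_div_iff₀ (by positivity) (by positivity), neg_neg] at h
  rw [show u - 2 * m * -x = u + 2 * m * x by ring, show u + 2 * k * -x = u - 2 * k * x by ring]
  have : 0 < 2 * x := by positivity
  have h' : (2 * x) * ((sp (u + 2 * k * x) - sp (u - 2 * k * x)) * m) <
    (2 * x) * ((sp (u + 2 * m * x) - sp (u - 2 * m * x)) * k) := by linarith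
  have := lt_of_mul_lt_mul_left h' this.le
  linarith

noncomputable def GG (k m x u : ℝ) : ℝ := Real.exp (-u/2) * (1 - Real.exp (-(LL k m x u) / 2))

noncomputable def Psi (k m x : ℝ) : ℝ := ∫ u, GG k m x u

lemma GG_nonneg {k m : ℝ} (hk : 0 < k) (hm : 0 < m) (x u : ℝ) : 0 ≤ GG k m x u := by
  refine mul_nonneg (Real.exp_pos _).le (sub_nonneg.2 (Real.exp_le_one_iff.2 ?_))
  linarith [LL_pos hk hm x u]

lemma GG_cont (k m x : ℝ) : Continuous (GG k m x) := by
  have := sp_cont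
  unfold GG LL
  fun_prop

lemma GG_int {k m : ℝ} (hk : 0 < k) (hm : 0 < m) (x : ℝ) : Integrable (GG k m x) := by
  rw [← integrableOn_univ, ← Set.Iic_union_Ioi (a := (0:ℝ))]
  refine IntegrableOn.union ?_ ?_
  · have i1 : IntegrableOn (fun u : ℝ => (k * Real.exp (- 2 * m * x) + m * Real.exp (2 * k * x)) *
        Real.exp ((1/2) * u)) (Iic 0) :=
      (integrableOn_exp_mul_Iic (by norm_num) 0).const_mul _
    refine i1.mono' (GG_cont k m x).aestronglyMeasurable (Filter.Eventually.of_forall fun u => ?_)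
    rw [Real.norm_of_nonneg (GG_nonneg hk hm x u)]
    unfold GG
    have h1 := Real.add_one_le_exp (-(LL k m x u) / 2)
    have h2 := LL_pos hk hm x u
    have h3 : LL k m x u ≤ Real.exp u * (k * Real.exp (- 2 * m * x) + m * Real.exp (2 * k * x)) := by
      unfold LL
      have e1 := mul_le_mul_of_nonneg_left (sp_le (u - 2 * m * x)) hk.le
      have e2 := mul_le_mul_of_nonneg_left (sp_le (u + 2 * k * x)) hm.le
      rw [show u - 2 * m * x = u + (-2 * m * x) by ring, Real.exp_add] at e1
      rw [Real.exp_add] at e2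
      rw [show u - 2 * m * x = u + (-2 * m * x) by ring]
      linarith
    calc _ ≤ Real.exp (-u/2) * (Real.exp u * (k * Real.exp (- 2 * m * x) + m * Real.exp (2 * k * x))) := by
          gcongr; linarith
      _ = _ := by
          rw [← mul_assoc, ← Real.exp_add, mul_comm]
          ring_nf
  · have i1 : IntegrableOn (fun u : ℝ => Real.exp ((-1/2) * u)) (Ioi 0) :=
      integrableOn_exp_mul_Ioi (by norm_num) 0
    refine i1.mono' (GG_cont k m x).aestronglyMeasurable (Filter.Eventually.of_forall fun u => ?_)
    rw [Real.norm_of_nonneg (GG_nonneg hk hm x u)]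
    unfold GG
    have := Real.exp_pos (-(LL k m x u) / 2)
    calc _ ≤ Real.exp (-u/2) * 1 := by gcongr; linarith
      _ = _ := by ring_nf

lemma int_lt {f g : ℝ → ℝ} (hf : Integrable f) (hg : Integrable g) (h : ∀ u, u ≠ 0 → f u < g u) :
    ∫ u, f u < ∫ u, g u := by
  have hae : ∀ᵐ u : ℝ, u ≠ 0 := by simp [ae_iff]
  have hp : 0 < ∫ u, (g - f) u := by
    rw [integral_pos_iff_support_of_nonneg_ae
      (hae.mono fun u hu => by simpa using (h u hu).le) (hg.sub hf)]
    have h2 : Ioi (0:ℝ) ⊆ Function.support (g - f) := fun u hu =>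
      (sub_pos.2 (h u (ne_of_gt hu))).ne'
    refine lt_of_lt_of_le ?_ (measure_mono h2)
    simp
  rw [integral_sub' hg hf] at hp
  linarith

lemma GG_lt {k m x x' u : ℝ} (h : LL k m x u < LL k m x' u) : GG k m x u < GG k m x' u := by
  unfold GG
  have := Real.exp_lt_exp.2 (show -(LL k m x' u) / 2 < -(LL k m x u) / 2 by linarith)
  have := Real.exp_pos (-u/2)
  gcongr

lemma Psi_mono {k m : ℝ} (hk : 0 < k) (hm : 0 < m) : StrictMonoOn (Psi k m) (Ici 0) := by
  intro a ha b hb hab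
  exact int_lt (GG_int hk hm a) (GG_int hk hm b) fun u _ => GG_lt (LL_mono hk hm u ha hb hab)

lemma Psi_anti {k m : ℝ} (hk : 0 < k) (hm : 0 < m) : StrictMonoOn (fun x => Psi k m (-x)) (Ici 0) := by
  intro a ha b hb hab
  refine int_lt (GG_int hk hm _) (GG_int hk hm _) fun u _ => GG_lt ?_
  have h := LL_mono hk hm (-u) ha hb hab
  simp only [LL_neg] at h
  linarith

lemma Psi_lt {k m : ℝ} (hk : 0 < k) (hkm : k < m) {x : ℝ} (hx : 0 < x) :
    Psi k m x < Psi k m (-x) := by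
  have hm : 0 < m := hk.trans hkm
  have e : ∀ y, 2 * Psi k m y = ∫ u, (GG k m y u + GG k m y (-u)) := by
    intro y
    rw [integral_add (GG_int hk hm y) (GG_int hk hm y).comp_neg, integral_neg_eq_self (GG k m y)]
    unfold Psi; ring
  have i : ∀ y, Integrable (fun u => GG k m y u + GG k m y (-u)) := fun y =>
    (GG_int hk hm y).add (GG_int hk hm y).comp_neg
  have key : ∀ u, u < 0 → GG k m x u + GG k m x (-u) < GG k m (-x) u + GG k m (-x) (-u) := by
    intro u hu
    have h := LL_lt hk hkm hx hu
    unfold GG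
    rw [LL_neg, LL_neg, neg_neg x]
    set A := LL k m x u
    set B := LL k m (-x) u
    have h1 := Real.exp_lt_exp.2 (show -B / 2 < -A / 2 by linarith)
    rw [show -(B - (k + m) * u) / 2 = -B / 2 + (k + m) * u / 2 by ring,
      show -(A - (k + m) * u) / 2 = -A / 2 + (k + m) * u / 2 by ring, Real.exp_add, Real.exp_add]
    have h2 : Real.exp (-(-u) / 2) * Real.exp ((k + m) * u / 2) < Real.exp (-u/2) := by
      rw [← Real.exp_add]
      apply Real.exp_lt_exp.2
      nlinarith
    nlinarith [mul_pos (sub_pos.2 h1) (sub_pos.2 h2)]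
  have := int_lt (i x) (i (-x)) fun u hu => by
    rcases hu.lt_or_gt with hu | hu
    · exact key u hu
    · have := key (-u) (by linarith)
      rw [neg_neg] at this
      linarith
  rw [← e, ← e] at this
  linarith

lemma final_aux {k m : ℝ} (hk : 0 < k) (hkm : k < m) {α β : ℝ} (h1 : Psi k m α = Psi k m β)
    (h2 : Psi k m (-α) = Psi k m (-β)) : α = β := by
  have hm : 0 < m := hk.trans hkm
  have M := Psi_mono hk hm
  have N := Psi_anti hk hm
  have key : ∀ α γ : ℝ, 0 < α → 0 < γ → Psi k m α = Psi k m (-γ) → Psi k m (-α) = Psi k m γ →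
      False := by
    intro α γ ha hg h1 h2
    have a1 := Psi_lt hk hkm ha
    have a2 := Psi_lt hk hkm hg
    linarith
  rcases le_or_gt 0 α with ha | ha <;> rcases le_or_gt 0 β with hb | hb
  · exact M.injOn ha hb h1
  · rcases ha.eq_or_lt with rfl | ha
    · have := N.injOn (x₁ := 0) (x₂ := -β) (by simp) (by simp; linarith) (by simpa using h1)
      linarith
    · exact (key α (-β) ha (by linarith) (by simpa using h1) h2).elim
  · rcases hb.eq_or_lt with rfl | hb
    · have := N.injOn (x₁ := 0) (x₂ := -α) (by simp) (by simp; linarith) (by simpa using h1.symm)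
      linarith
    · exact (key β (-α) hb (by linarith) (by simpa using h1.symm) h2.symm).elim
  · have := N.injOn (x₁ := -α) (x₂ := -β) (by simp; linarith) (by simp; linarith) (by simpa using h1)
    linarith

lemma sqrt_sp (v : ℝ) : Real.sqrt (1 / (1 + Real.exp v)) = Real.exp (-(sp v) / 2) := by
  rw [Real.exp_half, Real.exp_neg, sp, Real.exp_log (by positivity), one_div]

lemma J_bridge (n : ℕ) (hn : 3 ≤ n) : ∃ K : ENNReal, ∀ k : ℕ, 1 ≤ k → k < n → ∀ x : ℝ,
    ENNReal.ofReal (Jfun n k (Real.exp x)) * K = ENNReal.ofReal (Psi k (n - k : ℕ) x) := by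
  obtain ⟨K, hK⟩ := bridge n hn
  refine ⟨K, fun k hk1 hkn x => ?_⟩
  have hk : (0:ℝ) < k := by exact_mod_cast hk1
  have hm : (0:ℝ) < (n - k : ℕ) := by exact_mod_cast (by omega : 0 < n - k)
  set w : Fin n → ℝ := fun j => Real.exp (if (j : ℕ) < k then -(2 * (n - k : ℕ) * x) else 2 * k * x)
    with hw
  have hJ : Jfun n k (Real.exp x) =
      ∫ θ : Metric.sphere (0 : EuclideanSpace ℝ (Fin n)) 1,
        Real.sqrt (∑ j, w j * (θ : EuclideanSpace ℝ (Fin n)) j ^ 2) ∂(sphereMeasure n) := by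
    unfold Jfun
    rw [← integral_const_mul]
    congr 1
    ext θ
    rw [← Real.sqrt_sq (show 0 ≤ Real.exp x ^ k by positivity), ← Real.sqrt_mul (by positivity),
      Finset.mul_sum]
    congr 1
    refine Finset.sum_congr rfl fun j _ => ?_
    rw [← mul_assoc]
    congr 1
    simp only [hw]
    split_ifs
    · rw [← Real.exp_nat_mul, ← Real.exp_nat_mul, ← Real.exp_nat_mul, ← Real.exp_neg, ← Real.exp_add]
      congr 1
      push_cast [Nat.cast_sub hkn.le]
      ring
    · rw [← Real.exp_nat_mul, ← Real.exp_nat_mul, mul_one]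
      congr 1
      push_cast
      ring
  have : IsFiniteMeasure (sphereMeasure n) := by unfold sphereMeasure; infer_instance
  have hcont : Continuous (fun θ : Metric.sphere (0 : EuclideanSpace ℝ (Fin n)) 1 =>
      Real.sqrt (∑ j, w j * (θ : EuclideanSpace ℝ (Fin n)) j ^ 2)) := by fun_prop
  rw [hJ, ofReal_integral_eq_lintegral_ofReal
    (hcont.integrable_of_hasCompactSupport (HasCompactSupport.of_compactSpace _))
    (Filter.Eventually.of_forall fun θ => Real.sqrt_nonneg _), hK w (fun j => Real.exp_pos _), Psi,
    ofReal_integral_eq_lintegral_ofReal (GG_int hk hm x)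
      (Filter.Eventually.of_forall (GG_nonneg hk hm x))]
  congr 1
  ext u
  congr 1
  unfold GG
  congr 2
  simp only [hw, ← Real.exp_add, sqrt_sp]
  rw [← Real.exp_sum]
  congr 1
  have : ∀ j : Fin n, -(sp (u + if (j : ℕ) < k then -(2 * (n - k : ℕ) * x) else 2 * k * x)) / 2 =
      if (j : ℕ) < k then -(sp (u - 2 * (n - k : ℕ) * x)) / 2 else -(sp (u + 2 * k * x)) / 2 := by
    intro j
    split_ifs
    · rw [← sub_eq_add_neg]
    · rfl
  simp only [this]
  rw [Fin.sum_univ_eq_sum_range (fun j => if j < k then -(sp (u - 2 * (n - k : ℕ) * x)) / 2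
    else -(sp (u + 2 * k * x)) / 2) n]
  obtain ⟨m, rfl⟩ : ∃ m, n = k + m := ⟨n - k, by omega⟩
  rw [Finset.sum_range_add, Finset.sum_congr rfl (fun j hj => if_pos (Finset.mem_range.1 hj))]
  simp [LL]
  ring

lemma Psi_symm (k m x : ℝ) : Psi k m x = Psi m k (-x) := by
  unfold Psi GG LL
  congr 1
  ext u
  congr 3
  ring_nf

lemma Psi_nonneg {k m : ℝ} (hk : 0 < k) (hm : 0 < m) (x : ℝ) : 0 ≤ Psi k m x :=
  integral_nonneg (GG_nonneg hk hm x)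

/-- Two ellipsoids of revolution in `ℝⁿ` with equal volumes and equal intrinsic volumes
`V_k` and `V_{n-k}`, `2k ≠ n`, are congruent: `J_k(a) = J_k(b)` and
`J_{n-k}(a) = J_{n-k}(b)` force `a = b`. -/
theorem revolution_ellipsoid_unique_of_Jk_Jnk
    (n : ℕ) (hn : 3 ≤ n) (k : ℕ) (hk1 : 1 ≤ k) (hk2 : k ≤ n - 1) (hk3 : 2 * k ≠ n)
    (a b : ℝ) (ha : 0 < a) (hb : 0 < b)
    (h1 : Jfun n k a = Jfun n k b)
    (h2 : Jfun n (n - k) a = Jfun n (n - k) b) :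
    a = b := by
  obtain ⟨K, hK⟩ := J_bridge n hn
  have key : ∀ k : ℕ, 1 ≤ k → k < n → Jfun n k a = Jfun n k b →
      Psi k (n - k : ℕ) (Real.log a) = Psi k (n - k : ℕ) (Real.log b) := by
    intro k hk1 hkn h
    have hk : (0:ℝ) < k := by exact_mod_cast hk1
    have hm : (0:ℝ) < (n - k : ℕ) := by exact_mod_cast (by omega : 0 < n - k)
    have e1 := hK k hk1 hkn (Real.log a)
    have e2 := hK k hk1 hkn (Real.log b)
    rw [Real.exp_log ha] at e1
    rw [Real.exp_log hb, ← h, e1] at e2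
    exact (ENNReal.ofReal_eq_ofReal_iff (Psi_nonneg hk hm _) (Psi_nonneg hk hm _)).1 e2
  have f1 := key k hk1 (by omega) h1
  have f2 := key (n - k) (by omega) (by omega) h2
  rw [show n - (n - k) = k by omega] at f2
  have hk : (0:ℝ) < k := by exact_mod_cast hk1
  have hm : (0:ℝ) < (n - k : ℕ) := by exact_mod_cast (by omega : 0 < n - k)
  have : Real.log a = Real.log b := by
    rcases lt_or_gt_of_ne (show k ≠ n - k by omega) with h | h
    · refine final_aux hk (Nat.cast_lt.2 h) f1 ?_
      rw [Psi_symm, neg_neg, f2, Psi_symm]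
    · refine final_aux hm (Nat.cast_lt.2 h) f2 ?_
      rw [Psi_symm, neg_neg, f1, Psi_symm]
  exact Real.log_injOn_pos ha hb this
end

section
/- Let E₁ and E₂ be ellipsoids in ℝⁿ, n ≥ 2, centered at the origin, and let i₁, …, iₙ be n distinct nonzero real numbers in the interval (−2, n]. If Ṽ_{i_k}(E₁) = Ṽ_{i_k}(E₂) for every k = 1, …, n, then E₁ and E₂ are congruent; equivalently, the multisets of semiaxes of E₁ and E₂ coincide. -/
open MeasureTheory Real Set

noncomputable def radial {n : ℕ} (K : Set (EuclideanSpace ℝ (Fin n)))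
    (x : EuclideanSpace ℝ (Fin n)) : ℝ :=
  sSup {t : ℝ | 0 ≤ t ∧ t • x ∈ K}

noncomputable def dualVolume (n : ℕ) (i : ℝ) (K : Set (EuclideanSpace ℝ (Fin n))) : ℝ :=
  (1 / n) * ∫ θ : Metric.sphere (0 : EuclideanSpace ℝ (Fin n)) 1,
    radial K (θ : EuclideanSpace ℝ (Fin n)) ^ i ∂(sphereMeasure n)

def ellipsoidSet {n : ℕ} (a : Fin n → ℝ) : Set (EuclideanSpace ℝ (Fin n)) :=
  {x | ∑ j, (x j) ^ 2 / (a j) ^ 2 ≤ 1}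

lemma expsum_zero : ∀ (m : ℕ) (s c x : Fin m → ℝ), Function.Injective s → StrictMono x →
    (∀ l, ∑ k, c k * Real.exp (s k * x l) = 0) → ∀ k, c k = 0 := by
  intro m
  induction m with
  | zero => intro s c x _ _ _ k; exact k.elim0
  | succ m ih =>
    intro s c x hs hx hz
    let h : ℝ → ℝ := fun y => ∑ k, c k * Real.exp ((s k - s 0) * y)
    have hh : ∀ l, h (x l) = 0 := by
      intro l
      have : h (x l) = Real.exp (-(s 0 * x l)) * ∑ k, c k * Real.exp (s k * x l) := by
        simp only [h, Finset.mul_sum]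
        refine Finset.sum_congr rfl fun k _ => ?_
        rw [mul_left_comm, ← Real.exp_add]
        congr 2; ring
      rw [this, hz, mul_zero]
    have hd : ∀ y, HasDerivAt h (∑ k, c k * (Real.exp ((s k - s 0) * y) * (s k - s 0))) y := by
      intro y
      refine HasDerivAt.fun_sum fun k _ => ?_
      have := (((hasDerivAt_id y).const_mul (s k - s 0)).exp).const_mul (c k)
      simpa using this
    have hrolle : ∀ l : Fin m, ∃ y ∈ Ioo (x l.castSucc) (x l.succ),
        ∑ k, c k * (Real.exp ((s k - s 0) * y) * (s k - s 0)) = 0 := by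
      intro l
      refine exists_hasDerivAt_eq_zero (hx Fin.castSucc_lt_succ) ?_ ?_ (fun y _ => hd y)
      · exact fun y _ => (hd y).continuousAt.continuousWithinAt
      · rw [hh, hh]
    choose y hy hy0 using hrolle
    have hmono : StrictMono y := by
      intro l l' hll
      have h1 := (hy l).2
      have h2 := (hy l').1
      have h3 : x l.succ ≤ x l'.castSucc := hx.monotone (by
        rw [Fin.le_def]; simp; exact hll)
      linarith
    have key := ih (fun k => s k.succ - s 0) (fun k => c k.succ * (s k.succ - s 0)) y
      (by
        intro k k' hk
        have : s k.succ = s k'.succ := by simpa using hk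
        exact Fin.succ_injective _ (hs this)) hmono (by
        intro l
        have := hy0 l
        rw [Fin.sum_univ_succ] at this
        simp only [sub_self, mul_zero, zero_add] at this
        rw [← this]
        exact Finset.sum_congr rfl fun k _ => by ring)
    have hsucc : ∀ k : Fin m, c k.succ = 0 := by
      intro k
      rcases mul_eq_zero.1 (key k) with h | h
      · exact h
      · exact absurd (hs (sub_eq_zero.1 h)) (Fin.succ_ne_zero k)
    have h0 : c 0 = 0 := by
      have := hz 0
      rw [Fin.sum_univ_succ] at this
      simpa [hsucc, (Real.exp_pos _).ne'] using this
    intro k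
    exact Fin.cases h0 hsucc k

lemma rpowsum_zeros (m : ℕ) (s c : Fin m → ℝ) (hs : Function.Injective s) (hc : c ≠ 0) :
    ∃ Z : Finset ℝ, Z.card < m ∧ ∀ t, 0 < t → t ∉ Z → ∑ k, c k * t ^ s k ≠ 0 := by
  by_contra hcon
  push Not at hcon
  -- no finset of zeros of card m
  let S : Set ℝ := {t | 0 < t ∧ ∑ k, c k * t ^ s k = 0}
  have hno : ∀ F : Finset ℝ, (F : Set ℝ) ⊆ S → F.card ≠ m := by
    intro F hF hcard
    apply hc
    funext k
    refine expsum_zero m s c (fun l => Real.log (F.orderEmbOfFin hcard l)) hs ?_ ?_ k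
    · intro l l' hll
      exact Real.log_lt_log (hF (F.orderEmbOfFin_mem hcard l)).1
        ((F.orderEmbOfFin hcard).strictMono hll)
    · intro l
      have := hF (F.orderEmbOfFin_mem hcard l)
      rw [← this.2]
      refine Finset.sum_congr rfl fun k _ => ?_
      rw [Real.rpow_def_of_pos this.1, mul_comm (s k)]
  have hfin : S.Finite := by
    by_contra hinf
    obtain ⟨F, hF, hFc⟩ := Set.Infinite.exists_subset_card_eq hinf m
    exact hno F hF hFc
  have hlt : hfin.toFinset.card < m := by
    by_contra hge
    push Not at hge
    obtain ⟨F, hF, hFc⟩ := Finset.exists_subset_card_eq hge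
    refine hno F (fun x hx => ?_) hFc
    simpa using hF hx
  obtain ⟨t, ht, htn, ht0⟩ := hcon hfin.toFinset hlt
  apply htn
  simp [S, ht, ht0]

lemma const_sign {D : Set ℝ} (hD : IsPreconnected D) {h : ℝ → ℝ} (hc : ContinuousOn h D)
    (hne : ∀ x ∈ D, h x ≠ 0) : (∀ x ∈ D, 0 < h x) ∨ (∀ x ∈ D, h x < 0) := by
  by_contra hcon
  push Not at hcon
  obtain ⟨⟨x, hx, hx0⟩, ⟨y, hy, hy0⟩⟩ := hcon
  obtain ⟨z, hz, hz0⟩ := hD.intermediate_value hx hy hc ⟨hx0, hy0⟩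
  exact hne z hz hz0

lemma sign_poly (g : ℝ → ℝ) (Z : Finset ℝ) : ∀ D : Set ℝ, D.OrdConnected → ContinuousOn g D →
    (∀ x ∈ D, x ∉ Z → g x ≠ 0) →
    ∃ p : Polynomial ℝ, p.natDegree ≤ Z.card ∧ (∀ x, x ∉ Z → p.eval x ≠ 0) ∧
      ∀ x ∈ D, x ∉ Z → 0 < g x * p.eval x := by
  induction Z using Finset.induction_on_max with
  | empty =>
    intro D hD hc hne
    rcases const_sign hD.isPreconnected hc (fun x hx => hne x hx (by simp)) with h | h
    · exact ⟨1, by simp, by simp, fun x hx _ => by simpa using h x hx⟩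
    · exact ⟨-1, by simp, by simp, fun x hx _ => by simpa using h x hx⟩
  | insert z Z hz ih =>
    intro D hD hc hne
    have hzZ : z ∉ Z := fun h => lt_irrefl _ (hz z h)
    obtain ⟨p, hp1, hp2, hp3⟩ := ih (D ∩ Iio z) (hD.inter ordConnected_Iio)
      (hc.mono inter_subset_left) (by
        intro x hx hxZ
        refine hne x hx.1 ?_
        simp only [Finset.mem_insert, not_or]
        exact ⟨ne_of_lt hx.2, hxZ⟩)
    have hc2 : ContinuousOn (fun x => g x * p.eval x) (D ∩ Ioi z) :=
      (hc.mono inter_subset_left).mul p.continuous.continuousOn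
    have hnot : ∀ x, z < x → x ∉ Z := fun x hx h => lt_asymm hx (hz x h)
    have hcard : (insert z Z).card = Z.card + 1 := Finset.card_insert_of_notMem hzZ
    rcases const_sign (hD.inter ordConnected_Ioi).isPreconnected hc2 (by
      intro x hx
      refine mul_ne_zero (hne x hx.1 ?_) (hp2 x (hnot x hx.2))
      simp only [Finset.mem_insert, not_or]
      exact ⟨ne_of_gt hx.2, hnot x hx.2⟩) with h | h
    · refine ⟨p, by omega, fun x hx => hp2 x (fun h => hx (Finset.mem_insert_of_mem h)), ?_⟩
      intro x hx hxZ
      simp only [Finset.mem_insert, not_or] at hxZ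
      rcases lt_or_gt_of_ne hxZ.1 with hlt | hgt
      · exact hp3 x ⟨hx, hlt⟩ hxZ.2
      · exact h x ⟨hx, hgt⟩
    · refine ⟨p * (Polynomial.C z - Polynomial.X), ?_, ?_, ?_⟩
      · refine Polynomial.natDegree_mul_le.trans ?_
        have : (Polynomial.C z - Polynomial.X : Polynomial ℝ).natDegree ≤ 1 := by
          compute_degree
        omega
      · intro x hx
        simp only [Finset.mem_insert, not_or] at hx
        simp only [Polynomial.eval_mul, Polynomial.eval_sub, Polynomial.eval_C, Polynomial.eval_X]
        exact mul_ne_zero (hp2 x hx.2) (sub_ne_zero.2 (Ne.symm hx.1))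
      · intro x hx hxZ
        simp only [Finset.mem_insert, not_or] at hxZ
        simp only [Polynomial.eval_mul, Polynomial.eval_sub, Polynomial.eval_C, Polynomial.eval_X]
        rw [← mul_assoc]
        rcases lt_or_gt_of_ne hxZ.1 with hlt | hgt
        · exact mul_pos (hp3 x ⟨hx, hlt⟩ hxZ.2) (sub_pos.2 hlt)
        · exact mul_pos_of_neg_of_neg (h x ⟨hx, hgt⟩) (sub_neg.2 hgt)

lemma cheb (m : ℕ) (s : Fin m → ℝ) (hs : Function.Injective s) (w : ℝ → ℝ)
    (hw : ∀ t, 0 < t → 0 < w t)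
    (hIntg : ∀ k (j : ℕ), j < m → IntegrableOn (fun t => t ^ s k * t ^ j * w t) (Ioi 0))
    (q : Polynomial ℝ) (hq : q.degree < m)
    (h0 : ∀ k, ∫ t in Ioi (0:ℝ), t ^ s k * q.eval t * w t = 0) : q = 0 := by
  by_contra hq0
  have hevalsum : ∀ p : Polynomial ℝ, p.degree < m → ∀ t,
      p.eval t = ∑ j : Fin m, p.coeff j * t ^ (j : ℕ) := by
    intro p hp t
    have hm : p.natDegree < m := by
      rcases eq_or_ne p 0 with rfl | h
      · rcases Nat.eq_zero_or_pos m with rfl | h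
        · exact absurd (Polynomial.degree_lt_iff_coeff_zero q 0 |>.1 hq) (fun h => hq0 (by
            ext j; simpa using h j (Nat.zero_le _)))
        · simpa using h
      · exact (Polynomial.natDegree_lt_iff_degree_lt h).2 hp
    rw [Polynomial.eval_eq_sum_range' hm, Finset.sum_range]
  let M : Matrix (Fin m) (Fin m) ℝ := fun k j => ∫ t in Ioi (0:ℝ), t ^ s k * t ^ (j:ℕ) * w t
  have hM : ∀ (k : Fin m) (p : Polynomial ℝ), p.degree < m →
      ∫ t in Ioi (0:ℝ), t ^ s k * p.eval t * w t = ∑ j : Fin m, M k j * p.coeff j := by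
    intro k p hp
    simp only [M]
    simp_rw [← integral_mul_const]
    rw [← integral_finsetSum _ (fun (j : Fin m) _ => (hIntg k j j.2).mul_const _)]
    congr 1; funext t
    rw [hevalsum p hp, Finset.mul_sum, Finset.sum_mul]
    exact Finset.sum_congr rfl fun j _ => by ring
  have hintp : ∀ (k : Fin m) (p : Polynomial ℝ), p.degree < m →
      IntegrableOn (fun t => t ^ s k * p.eval t * w t) (Ioi 0) := by
    intro k p hp
    have : (fun t => t ^ s k * p.eval t * w t) =
        fun t => ∑ j : Fin m, t ^ s k * t ^ (j:ℕ) * w t * p.coeff j := by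
      funext t
      rw [hevalsum p hp, Finset.mul_sum, Finset.sum_mul]
      exact Finset.sum_congr rfl fun j _ => by ring
    rw [this]
    exact integrable_finsetSum _ (fun j _ => (hIntg k j j.2).mul_const _)
  have hdet : M.det = 0 := by
    rw [← Matrix.exists_mulVec_eq_zero_iff]
    refine ⟨fun j => q.coeff j, ?_, ?_⟩
    · intro h
      apply hq0
      ext j
      by_cases hj : j < m
      · simpa using congrFun h ⟨j, hj⟩
      · simpa using (Polynomial.degree_lt_iff_coeff_zero q m).1 hq j (not_lt.1 hj)
    · funext k
      have := hM k q hq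
      rw [h0 k] at this
      simpa [Matrix.mulVec, dotProduct] using this.symm
  obtain ⟨c, hc, hcM⟩ := Matrix.exists_vecMul_eq_zero_iff.2 hdet
  obtain ⟨Z, hZ, hZ0⟩ := rpowsum_zeros m s c hs hc
  have hcont : ContinuousOn (fun t : ℝ => ∑ k, c k * t ^ s k) (Ioi 0) := by
    refine continuousOn_finsetSum _ fun k _ => continuousOn_const.mul ?_
    intro t ht
    exact (Real.continuousAt_rpow_const t (s k) (Or.inl (ne_of_gt ht))).continuousWithinAt
  obtain ⟨p, hp1, hp2, hp3⟩ := sign_poly (fun t => ∑ k, c k * t ^ s k) Z (Ioi 0)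
    ordConnected_Ioi hcont (fun t ht htZ => hZ0 t ht htZ)
  have hpd : p.degree < m := lt_of_le_of_lt Polynomial.degree_le_natDegree
    (by exact_mod_cast (lt_of_le_of_lt hp1 hZ))
  have hfun : (fun t => (∑ k, c k * t ^ s k) * p.eval t * w t) =
      fun t => ∑ k, c k * (t ^ s k * p.eval t * w t) := by
    funext t
    rw [Finset.sum_mul, Finset.sum_mul]
    exact Finset.sum_congr rfl fun j _ => by ring
  have hI : IntegrableOn (fun t => (∑ k, c k * t ^ s k) * p.eval t * w t) (Ioi 0) := by
    rw [hfun]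
    exact integrable_finsetSum _ (fun k _ => (hintp k p hpd).const_mul _)
  have hzero : ∫ t in Ioi (0:ℝ), (∑ k, c k * t ^ s k) * p.eval t * w t = 0 := by
    rw [hfun, integral_finsetSum _ (fun k _ => (hintp k p hpd).const_mul _)]
    simp_rw [integral_const_mul, hM _ p hpd, Finset.mul_sum]
    rw [Finset.sum_comm]
    refine Finset.sum_eq_zero fun j _ => ?_
    have := congrFun hcM j
    simp only [Matrix.vecMul, dotProduct, Pi.zero_apply] at this
    rw [show ∑ k, c k * (M k j * p.coeff j) = (∑ k, c k * M k j) * p.coeff j by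
      rw [Finset.sum_mul]; exact Finset.sum_congr rfl fun j _ => by ring, this, zero_mul]
  have hae : ∀ᵐ t ∂(volume.restrict (Ioi (0:ℝ))), 0 < (∑ k, c k * t ^ s k) * p.eval t * w t := by
    have hZae : ∀ᵐ t ∂(volume.restrict (Ioi (0:ℝ))), t ∉ (Z : Set ℝ) :=
      measure_eq_zero_iff_ae_notMem.1 (Set.Finite.measure_zero Z.finite_toSet _)
    filter_upwards [hZae, ae_restrict_mem measurableSet_Ioi] with t ht ht0
    exact mul_pos (hp3 t ht0 (by simpa using ht)) (hw t ht0)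
  have := (integral_eq_zero_iff_of_nonneg_ae (hae.mono fun t ht => ht.le) hI).1 hzero
  have hfalse : ∀ᵐ t ∂(volume.restrict (Ioi (0:ℝ))), False := by
    filter_upwards [this, hae] with t h1 h2
    exact h2.ne' h1
  rw [Filter.eventually_false_iff_eq_bot, ae_eq_bot] at hfalse
  have h3 := congrArg (fun μ => μ (univ : Set ℝ)) hfalse
  simp at h3
/-- Diagonal quadratic form with coefficients `γ` in the frame given by `T`. -/
noncomputable def qf {n : ℕ} (T : EuclideanSpace ℝ (Fin n) ≃ₗᵢ[ℝ] EuclideanSpace ℝ (Fin n))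
    (γ : Fin n → ℝ) (x : EuclideanSpace ℝ (Fin n)) : ℝ := ∑ j, γ j * (T.symm x j) ^ 2

section
variable {n : ℕ} (T : EuclideanSpace ℝ (Fin n) ≃ₗᵢ[ℝ] EuclideanSpace ℝ (Fin n))

lemma qf_continuous (γ : Fin n → ℝ) : Continuous (qf T γ) := by
  unfold qf
  refine continuous_finsetSum _ fun j _ => continuous_const.mul (Continuous.pow ?_ 2)
  exact (EuclideanSpace.proj (𝕜 := ℝ) j).continuous.comp T.symm.continuous

lemma qf_smul (γ : Fin n → ℝ) (r : ℝ) (x : EuclideanSpace ℝ (Fin n)) :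
    qf T γ (r • x) = r ^ 2 * qf T γ x := by
  simp only [qf, map_smul, PiLp.smul_apply, smul_eq_mul, Finset.mul_sum]
  exact Finset.sum_congr rfl fun j _ => by ring

lemma qf_pos {γ : Fin n → ℝ} (hγ : ∀ j, 0 < γ j) {x : EuclideanSpace ℝ (Fin n)} (hx : x ≠ 0) :
    0 < qf T γ x := by
  have hne : T.symm x ≠ 0 := by simpa using hx
  obtain ⟨j, hj⟩ : ∃ j, T.symm x j ≠ 0 := by
    by_contra h
    push Not at h
    exact hne (by ext j; simpa using h j)
  refine Finset.sum_pos' (fun j _ => mul_nonneg (hγ j).le (sq_nonneg _)) ⟨j, Finset.mem_univ _, ?_⟩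
  have := hγ j
  positivity

lemma qf_one_add (γ : Fin n → ℝ) (t : ℝ) (x : EuclideanSpace ℝ (Fin n)) :
    qf T (fun j => 1 + t * γ j) x = ‖x‖ ^ 2 + t * qf T γ x := by
  rw [← T.symm.norm_map x, EuclideanSpace.norm_sq_eq]
  simp only [qf, Finset.mul_sum, ← Finset.sum_add_distrib, Real.norm_eq_abs, sq_abs]
  exact Finset.sum_congr rfl fun j _ => by ring

lemma gauss_integrable {γ : Fin n → ℝ} (hγ : ∀ j, 0 < γ j) :
    Integrable (fun x => Real.exp (-qf T γ x)) := by
  have h1 : Integrable (fun y : EuclideanSpace ℝ (Fin n) => Real.exp (-∑ j, γ j * (y j) ^ 2)) := by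
    rw [← (PiLp.volume_preserving_toLp (Fin n)).integrable_comp_emb
      (MeasurableEquiv.toLp 2 _).measurableEmbedding]
    have : ((fun y : EuclideanSpace ℝ (Fin n) => Real.exp (-∑ j, γ j * (y j) ^ 2)) ∘
        WithLp.toLp 2) = fun v : Fin n → ℝ => ∏ j, Real.exp (-γ j * v j ^ 2) := by
      funext v
      simp [← Real.exp_sum]
    rw [this]
    exact Integrable.fintype_prod (f := fun j (v : ℝ) => Real.exp (-γ j * v ^ 2))
      (fun j => integrable_exp_neg_mul_sq (hγ j))
  exact (T.symm.measurePreserving.integrable_comp_emb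
    T.symm.toHomeomorph.measurableEmbedding).2 h1

lemma gauss_integral {γ : Fin n → ℝ} :
    ∫ x, Real.exp (-qf T γ x) = ∏ j, √(π / γ j) := by
  have h1 : ∫ x, Real.exp (-qf T γ x) =
      ∫ y : EuclideanSpace ℝ (Fin n), Real.exp (-∑ j, γ j * (y j) ^ 2) :=
    T.symm.measurePreserving.integral_comp T.symm.toHomeomorph.measurableEmbedding
      (fun y : EuclideanSpace ℝ (Fin n) => Real.exp (-∑ j, γ j * (y j) ^ 2))
  rw [h1, ← (PiLp.volume_preserving_toLp (Fin n)).integral_comp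
      (MeasurableEquiv.toLp 2 _).measurableEmbedding]
  have : ∀ v : Fin n → ℝ, Real.exp (-∑ j, γ j * ((WithLp.toLp 2 v : EuclideanSpace ℝ (Fin n)) j) ^ 2)
      = ∏ j, Real.exp (-γ j * v j ^ 2) := by
    intro v
    simp [← Real.exp_sum]
  simp_rw [this]
  rw [integral_fintype_prod_volume_eq_prod (fun j (v : ℝ) => Real.exp (-γ j * v ^ 2))]
  simp_rw [integral_gaussian]

lemma sphere_formula (hn : 2 ≤ n) {γ : Fin n → ℝ} (hγ : ∀ j, 0 < γ j) :
    (∫ θ : Metric.sphere (0 : EuclideanSpace ℝ (Fin n)) 1,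
      qf T γ θ ^ (-((n:ℝ) / 2)) ∂(sphereMeasure n)) =
      ((√π) ^ n / (1 / 2 * Gamma ((n:ℝ) / 2))) * (√(∏ j, γ j))⁻¹ := by
  have hn0 : (0:ℝ) < n := by exact_mod_cast (by omega : 0 < n)
  have hG : 0 < Gamma ((n:ℝ) / 2) := Gamma_pos_of_pos (by positivity)
  set μ : Measure (EuclideanSpace ℝ (Fin n)) := volume with hμ
  have hdim : Module.finrank ℝ (EuclideanSpace ℝ (Fin n)) = n := by simp
  let G : Metric.sphere (0 : EuclideanSpace ℝ (Fin n)) 1 × Ioi (0:ℝ) → ℝ :=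
    fun p => Real.exp (-(qf T γ p.1 * (p.2:ℝ) ^ 2))
  have hcomp : ∀ x : ({0}ᶜ : Set (EuclideanSpace ℝ (Fin n))),
      G (homeomorphUnitSphereProd _ x) = Real.exp (-qf T γ x) := by
    intro x
    have hx : (x : EuclideanSpace ℝ (Fin n)) ≠ 0 := x.2
    have hx' : ‖(x : EuclideanSpace ℝ (Fin n))‖ ≠ 0 := by simpa using hx
    simp only [G, homeomorphUnitSphereProd_apply_fst_coe, homeomorphUnitSphereProd_apply_snd_coe,
      qf_smul]
    congr 2
    field_simp
  have hInt : Integrable G (μ.toSphere.prod (.volumeIoiPow (n - 1))) := by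
    have := μ.measurePreserving_homeomorphUnitSphereProd.integrable_comp_emb (g := G)
      (Homeomorph.measurableEmbedding _)
    rw [hdim] at this
    rw [← this, show G ∘ (homeomorphUnitSphereProd (EuclideanSpace ℝ (Fin n))) =
      (fun x => Real.exp (-qf T γ x)) ∘ Subtype.val from funext hcomp,
      ← integrableOn_iff_comap_subtypeVal (measurableSet_singleton _).compl]
    exact (gauss_integrable T hγ).integrableOn
  have hval : ∫ p, G p ∂(μ.toSphere.prod (.volumeIoiPow (n - 1))) = ∏ j, √(π / γ j) := by
    have := μ.measurePreserving_homeomorphUnitSphereProd.integral_comp 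
      (Homeomorph.measurableEmbedding _) G
    rw [hdim] at this
    have : NullMeasurableSet ({0}ᶜ : Set (EuclideanSpace ℝ (Fin n))) μ :=
      (measurableSet_singleton _).compl.nullMeasurableSet
    rw [← gauss_integral T, ← ‹_ = ∫ p, G p ∂_›]
    simp_rw [hcomp]
    have : Nonempty (Fin n) := ⟨⟨0, by omega⟩⟩
    rw [integral_subtype_comap (measurableSet_singleton _).compl
      (fun x => Real.exp (-qf T γ x)), restrict_compl_singleton]
  rw [integral_prod _ hInt] at hval
  have hinner : ∀ θ : Metric.sphere (0 : EuclideanSpace ℝ (Fin n)) 1,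
      ∫ r, G (θ, r) ∂(Measure.volumeIoiPow (n - 1)) =
        qf T γ θ ^ (-((n:ℝ) / 2)) * (1 / 2 * Gamma ((n:ℝ) / 2)) := by
    intro θ
    have hq : 0 < qf T γ θ := qf_pos T hγ (by
      intro h; have := θ.2; rw [h] at this; simp at this)
    simp only [Measure.volumeIoiPow, ENNReal.ofReal]
    rw [integral_withDensity_eq_integral_smul (by fun_prop),
      integral_subtype_comap measurableSet_Ioi
        fun a : ℝ ↦ Real.toNNReal (a ^ (n - 1)) • Real.exp (-(qf T γ θ * a ^ 2))]
    have := integral_rpow_mul_exp_neg_mul_rpow (p := 2) (q := (n:ℝ) - 1) (b := qf T γ θ)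
      (by norm_num) (by linarith) hq
    rw [show -((n:ℝ) - 1 + 1) / 2 = -((n:ℝ) / 2) by ring,
      show ((n:ℝ) - 1 + 1) / 2 = ((n:ℝ) / 2) by ring] at this
    rw [← mul_assoc, ← this]
    refine setIntegral_congr_fun measurableSet_Ioi fun a ha => ?_
    have ha' : (0:ℝ) < a := ha
    simp only [NNReal.smul_def, Real.coe_toNNReal _ (pow_nonneg ha'.le (n-1)), smul_eq_mul]
    rw [← Real.rpow_natCast, Nat.cast_sub (by omega)]
    simp
  simp_rw [hinner] at hval
  rw [integral_mul_const] at hval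
  have hprod : ∏ j, √(π / γ j) = (√π) ^ n * (√(∏ j, γ j))⁻¹ := by
    simp_rw [Real.sqrt_div pi_pos.le, Finset.prod_div_distrib]
    rw [Real.sqrt_prod _ (fun j _ => (hγ j).le)]
    simp [div_eq_mul_inv]
  rw [hprod] at hval
  change (∫ θ, qf T γ θ ^ (-((n:ℝ) / 2)) ∂μ.toSphere) = _
  rw [div_mul_eq_mul_div, ← hval]
  field_simp
end
lemma sphere_ne_zero {n : ℕ} (θ : Metric.sphere (0 : EuclideanSpace ℝ (Fin n)) 1) :
    (θ : EuclideanSpace ℝ (Fin n)) ≠ 0 := by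
  intro h
  have := θ.2
  rw [h] at this
  simp at this

lemma radial_rpow {n : ℕ} (T : EuclideanSpace ℝ (Fin n) ≃ₗᵢ[ℝ] EuclideanSpace ℝ (Fin n))
    {a : Fin n → ℝ} (ha : ∀ j, 0 < a j) (i : ℝ) {x : EuclideanSpace ℝ (Fin n)} (hx : x ≠ 0) :
    radial (T '' ellipsoidSet a) x ^ i = qf T (fun j => ((a j) ^ 2)⁻¹) x ^ (-(i / 2)) := by
  have hu := qf_pos T (γ := fun j => ((a j) ^ 2)⁻¹) (fun j => by have := ha j; positivity) hx
  set u := qf T (fun j => ((a j) ^ 2)⁻¹) x with hudef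
  have hset : {t : ℝ | 0 ≤ t ∧ t • x ∈ T '' ellipsoidSet a} = Icc 0 (√u)⁻¹ := by
    ext t
    simp only [mem_ofPred_eq, mem_Icc]
    refine and_congr_right fun ht => ?_
    have h1 : t • x ∈ T '' ellipsoidSet a ↔ qf T (fun j => ((a j) ^ 2)⁻¹) (t • x) ≤ 1 := by
      constructor
      · rintro ⟨y, hy, hyx⟩
        rw [← hyx, qf]
        simp only [LinearIsometryEquiv.symm_apply_apply]
        refine le_trans (le_of_eq ?_) hy
        exact Finset.sum_congr rfl fun j _ => by rw [div_eq_mul_inv, mul_comm]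
      · intro h
        refine ⟨T.symm (t • x), ?_, by simp⟩
        refine le_trans (le_of_eq ?_) h
        exact Finset.sum_congr rfl fun j _ => by rw [div_eq_mul_inv, mul_comm]
    rw [h1, qf_smul, ← hudef]
    have hsu : 0 < √u := Real.sqrt_pos.2 hu
    rw [← one_div, le_div_iff₀ hsu]
    have h2 : t ^ 2 * u = (t * √u) ^ 2 := by rw [mul_pow, Real.sq_sqrt hu.le]
    rw [h2]
    have h3 : 0 ≤ t * √u := by positivity
    constructor
    · intro h; nlinarith
    · intro h; nlinarith
  have hnn : 0 ≤ (√u)⁻¹ := by positivity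
  rw [radial, hset, csSup_Icc hnn, Real.sqrt_eq_rpow, ← Real.rpow_neg hu.le, ← Real.rpow_mul hu.le]
  congr 1; ring

lemma one_sub_rpow_le {a t : ℝ} (ha : 0 < a) (ht : 0 < t) : 1 - (1 + t) ^ (-a) ≤ a * t := by
  rw [Real.rpow_def_of_pos (by linarith)]
  have h1 := Real.add_one_le_exp (Real.log (1 + t) * -a)
  have h2 : Real.log (1 + t) ≤ t := by
    have := Real.log_le_sub_one_of_pos (show 0 < 1 + t by linarith); linarith
  nlinarith

/-- Integrability on `(0, ∞)` from power bounds near `0` and near `∞`. -/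
lemma integrableOn_of_bounds {f : ℝ → ℝ} (hf : AEStronglyMeasurable f (volume.restrict (Ioi 0)))
    {p q K L : ℝ} (hp : -1 < p) (hq : q < -1)
    (h1 : ∀ t, 0 < t → t ≤ 1 → |f t| ≤ K * t ^ p) (h2 : ∀ t, 1 < t → |f t| ≤ L * t ^ q) :
    IntegrableOn f (Ioi 0) := by
  rw [← Ioc_union_Ioi_eq_Ioi (zero_le_one' ℝ)]
  refine IntegrableOn.union ?_ ?_
  · have hI : IntegrableOn (fun t : ℝ => K * t ^ p) (Ioc 0 1) := by
      have := (intervalIntegral.intervalIntegrable_rpow' (a := 0) (b := 1) hp)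
      rw [intervalIntegrable_iff_integrableOn_Ioc_of_le zero_le_one] at this
      exact this.const_mul K
    refine Integrable.mono' hI (hf.mono_measure (Measure.restrict_mono Ioc_subset_Ioi_self le_rfl)) ?_
    filter_upwards [ae_restrict_mem measurableSet_Ioc] with t ht
    exact h1 t ht.1 ht.2
  · have hI : IntegrableOn (fun t : ℝ => L * t ^ q) (Ioi 1) :=
      (integrableOn_Ioi_rpow_of_lt hq one_pos).const_mul L
    refine Integrable.mono' hI (hf.mono_measure
      (Measure.restrict_mono (Ioi_subset_Ioi zero_le_one) le_rfl)) ?_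
    filter_upwards [ae_restrict_mem measurableSet_Ioi] with t ht
    exact h2 t ht

/-- The admissible pairs `(s, δ)`. -/
def Adm (n : ℕ) (s δ : ℝ) : Prop := (0 < s ∧ s < (n:ℝ) / 2 ∧ δ = 0) ∨ (-1 < s ∧ s < 0 ∧ δ = 1)

lemma kernel_integrable {n : ℕ} (hn : 2 ≤ n) {s δ : ℝ} (h : Adm n s δ) :
    IntegrableOn (fun t : ℝ => t ^ (s - 1) * ((1 + t) ^ (-((n:ℝ) / 2)) - δ)) (Ioi 0) := by
  have hn0 : (0:ℝ) < (n:ℝ) / 2 := by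
    have : (0:ℝ) < n := by exact_mod_cast (by omega : 0 < n)
    positivity
  have hm : AEStronglyMeasurable (fun t : ℝ => t ^ (s - 1) * ((1 + t) ^ (-((n:ℝ) / 2)) - δ))
      (volume.restrict (Ioi 0)) := by
    refine Measurable.aestronglyMeasurable ?_
    fun_prop
  rcases h with ⟨hs0, hs1, rfl⟩ | ⟨hs0, hs1, rfl⟩
  · refine integrableOn_of_bounds hm (p := s - 1) (q := s - 1 - (n:ℝ)/2) (K := 1) (L := 1)
      (by linarith) (by linarith) ?_ ?_
    · intro t ht _
      rw [sub_zero, abs_of_nonneg (by positivity), one_mul]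
      refine mul_le_of_le_one_right (by positivity) ?_
      exact Real.rpow_le_one_of_one_le_of_nonpos (by linarith) (by linarith)
    · intro t ht
      have ht0 : 0 < t := by linarith
      rw [sub_zero, abs_of_nonneg (by positivity), one_mul, sub_eq_add_neg (s - 1),
        Real.rpow_add ht0]
      refine mul_le_mul_of_nonneg_left ?_ (by positivity)
      exact Real.rpow_le_rpow_of_nonpos ht0 (by linarith) (by linarith)
  · have hle : ∀ t : ℝ, 0 < t → (1 + t) ^ (-((n:ℝ) / 2)) ≤ 1 := fun t ht =>
      Real.rpow_le_one_of_one_le_of_nonpos (by linarith) (by linarith)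
    have habs : ∀ t : ℝ, 0 < t → |t ^ (s - 1) * ((1 + t) ^ (-((n:ℝ) / 2)) - 1)| =
        t ^ (s - 1) * (1 - (1 + t) ^ (-((n:ℝ) / 2))) := by
      intro t ht
      rw [abs_mul, abs_of_nonneg (show 0 ≤ t ^ (s-1) by positivity), abs_sub_comm,
        abs_of_nonneg (by linarith [hle t ht])]
    refine integrableOn_of_bounds hm (p := s) (q := s - 1) (K := (n:ℝ)/2) (L := 1)
      (by linarith) (by linarith) ?_ ?_
    · intro t ht _
      rw [habs t ht]
      have h1 := one_sub_rpow_le hn0 ht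
      have h2 : t ^ s = t ^ (s - 1) * t := by
        conv_rhs => rw [← Real.rpow_add_one ht.ne']
        congr 1; ring
      rw [h2]
      calc _ ≤ t ^ (s - 1) * ((n:ℝ)/2 * t) := mul_le_mul_of_nonneg_left h1 (by positivity)
        _ = _ := by ring
    · intro t ht
      have ht0 : 0 < t := by linarith
      rw [habs t ht0, one_mul]
      refine mul_le_of_le_one_right (by positivity) ?_
      have : 0 < (1 + t) ^ (-((n:ℝ) / 2)) := by positivity
      linarith

lemma kernel_scale {n : ℕ} {s δ κ : ℝ} (hκ : 0 < κ) {t : ℝ} (ht : 0 < t) :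
    t ^ (s - 1) * ((1 + t * κ) ^ (-((n:ℝ) / 2)) - δ) =
      κ ^ (1 - s) * ((κ * t) ^ (s - 1) * ((1 + κ * t) ^ (-((n:ℝ) / 2)) - δ)) := by
  rw [Real.mul_rpow hκ.le ht.le, mul_comm t κ, ← mul_assoc, ← mul_assoc, ← Real.rpow_add hκ]
  simp

lemma kernel_scaled_integrable {n : ℕ} (hn : 2 ≤ n) {s δ κ : ℝ} (h : Adm n s δ) (hκ : 0 < κ) :
    IntegrableOn (fun t : ℝ => t ^ (s - 1) * ((1 + t * κ) ^ (-((n:ℝ) / 2)) - δ)) (Ioi 0) := by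
  have h1 := (integrableOn_Ioi_comp_mul_left_iff
    (fun t : ℝ => t ^ (s - 1) * ((1 + t) ^ (-((n:ℝ) / 2)) - δ)) 0 hκ).2
    (by simpa using kernel_integrable hn h)
  refine IntegrableOn.congr_fun (h1.const_mul (κ ^ (1 - s))) ?_ measurableSet_Ioi
  intro t ht
  exact (kernel_scale hκ ht).symm

lemma kernel_scaled_integral {n : ℕ} {s δ κ : ℝ} (hκ : 0 < κ) :
    ∫ t in Ioi (0:ℝ), t ^ (s - 1) * ((1 + t * κ) ^ (-((n:ℝ) / 2)) - δ) =
      κ ^ (-s) * ∫ t in Ioi (0:ℝ), t ^ (s - 1) * ((1 + t) ^ (-((n:ℝ) / 2)) - δ) := by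
  rw [setIntegral_congr_fun measurableSet_Ioi (fun t ht => kernel_scale hκ ht),
    integral_const_mul, integral_comp_mul_left_Ioi
    (fun t : ℝ => t ^ (s - 1) * ((1 + t) ^ (-((n:ℝ) / 2)) - δ)) 0 hκ, mul_zero, smul_eq_mul,
    ← mul_assoc, ← Real.rpow_neg_one κ, ← Real.rpow_add hκ]
  congr 2; ring

instance sphereMeasure_finite (n : ℕ) : IsFiniteMeasure (sphereMeasure n) := by
  unfold sphereMeasure; infer_instance

lemma qf_bounds {n : ℕ} (hn : 2 ≤ n)
    (T : EuclideanSpace ℝ (Fin n) ≃ₗᵢ[ℝ] EuclideanSpace ℝ (Fin n))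
    {γ : Fin n → ℝ} (hγ : ∀ j, 0 < γ j) :
    ∃ m M : ℝ, 0 < m ∧ 0 < M ∧ ∀ θ : Metric.sphere (0 : EuclideanSpace ℝ (Fin n)) 1,
      m ≤ qf T γ θ ∧ qf T γ θ ≤ M := by
  have hc : Continuous fun θ : Metric.sphere (0 : EuclideanSpace ℝ (Fin n)) 1 => qf T γ θ :=
    (qf_continuous T γ).comp continuous_subtype_val
  have hcomp : CompactSpace (Metric.sphere (0 : EuclideanSpace ℝ (Fin n)) 1) := inferInstance
  have : Nonempty (Fin n) := ⟨⟨0, by omega⟩⟩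
  have hne : Nonempty (Metric.sphere (0 : EuclideanSpace ℝ (Fin n)) 1) :=
    (NormedSpace.sphere_nonempty.2 zero_le_one).to_subtype
  obtain ⟨x, -, hx⟩ := isCompact_univ.exists_isMinOn univ_nonempty hc.continuousOn
  obtain ⟨y, -, hy⟩ := isCompact_univ.exists_isMaxOn univ_nonempty hc.continuousOn
  exact ⟨_, _, qf_pos T hγ (sphere_ne_zero x), qf_pos T hγ (sphere_ne_zero y), fun θ =>
    ⟨hx (mem_univ θ), hy (mem_univ θ)⟩⟩

lemma mellin_ell {n : ℕ} (hn : 2 ≤ n)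
    (T : EuclideanSpace ℝ (Fin n) ≃ₗᵢ[ℝ] EuclideanSpace ℝ (Fin n))
    {γ : Fin n → ℝ} (hγ : ∀ j, 0 < γ j) {s δ : ℝ} (h : Adm n s δ) :
    let f := fun t : ℝ => t ^ (s - 1) * (((√π) ^ n / (1 / 2 * Gamma ((n:ℝ) / 2))) *
      (√(∏ j, (1 + t * γ j)))⁻¹ - (sphereMeasure n).real univ * δ)
    IntegrableOn f (Ioi 0) ∧ ∫ t in Ioi (0:ℝ), f t =
      (∫ θ : Metric.sphere (0 : EuclideanSpace ℝ (Fin n)) 1, qf T γ θ ^ (-s) ∂(sphereMeasure n)) *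
      ∫ t in Ioi (0:ℝ), t ^ (s - 1) * ((1 + t) ^ (-((n:ℝ) / 2)) - δ) := by
  intro f
  have hn0 : (0:ℝ) < (n:ℝ) / 2 := by
    have : (0:ℝ) < n := by exact_mod_cast (by omega : 0 < n)
    positivity
  obtain ⟨m, M, hm, hM, hmM⟩ := qf_bounds hn T hγ
  have hqp : ∀ θ : Metric.sphere (0 : EuclideanSpace ℝ (Fin n)) 1, 0 < qf T γ θ :=
    fun θ => qf_pos T hγ (sphere_ne_zero θ)
  have hqc : Continuous fun θ : Metric.sphere (0 : EuclideanSpace ℝ (Fin n)) 1 => qf T γ θ :=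
    (qf_continuous T γ).comp continuous_subtype_val
  let F : Metric.sphere (0 : EuclideanSpace ℝ (Fin n)) 1 → ℝ → ℝ :=
    fun θ t => t ^ (s - 1) * ((1 + t * qf T γ θ) ^ (-((n:ℝ) / 2)) - δ)
  have hFm : Measurable (Function.uncurry F) := by
    have h1 : Measurable fun p : Metric.sphere (0 : EuclideanSpace ℝ (Fin n)) 1 × ℝ =>
      qf T γ p.1 := hqc.measurable.comp measurable_fst
    simp only [F, Function.uncurry_def]
    fun_prop
  obtain ⟨κ, hκ, hbound⟩ : ∃ κ : ℝ, 0 < κ ∧ ∀ θ, ∀ t : ℝ, 0 < t →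
      |(1 + t * qf T γ (θ : Metric.sphere (0 : EuclideanSpace ℝ (Fin n)) 1)) ^ (-((n:ℝ) / 2)) - δ| ≤
      |(1 + t * κ) ^ (-((n:ℝ) / 2)) - δ| := by
    rcases h with ⟨hs0, hs1, rfl⟩ | ⟨hs0, hs1, rfl⟩
    · refine ⟨m, hm, fun θ t ht => ?_⟩
      have := hqp θ
      rw [sub_zero, sub_zero, abs_of_nonneg (by positivity), abs_of_nonneg (by positivity)]
      refine Real.rpow_le_rpow_of_nonpos (by positivity) ?_ (by linarith)
      have := mul_le_mul_of_nonneg_left (hmM θ).1 ht.le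
      linarith
    · refine ⟨M, hM, fun θ t ht => ?_⟩
      have h0 := hqp θ
      have h1 : (1 + t * qf T γ θ) ^ (-((n:ℝ) / 2)) ≤ 1 :=
        Real.rpow_le_one_of_one_le_of_nonpos (by nlinarith [mul_pos ht h0]) (by linarith)
      have h2 : (1 + t * M) ^ (-((n:ℝ) / 2)) ≤ (1 + t * qf T γ θ) ^ (-((n:ℝ) / 2)) := by
        refine Real.rpow_le_rpow_of_nonpos (by positivity) ?_ (by linarith)
        have := mul_le_mul_of_nonneg_left (hmM θ).2 ht.le
        linarith
      rw [abs_of_nonpos (by linarith), abs_of_nonpos (by linarith)]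
      linarith
  have hFint : Integrable (Function.uncurry F)
      ((sphereMeasure n).prod (volume.restrict (Ioi (0:ℝ)))) := by
    have hb := (integrable_const (μ := sphereMeasure n) (1:ℝ)).mul_prod
      (kernel_scaled_integrable hn h hκ).abs
    refine hb.mono' hFm.aestronglyMeasurable ?_
    have hae : ∀ᵐ p ∂((sphereMeasure n).prod (volume.restrict (Ioi (0:ℝ)))), p.2 ∈ Ioi (0:ℝ) :=
      Measure.quasiMeasurePreserving_snd.ae (ae_restrict_mem measurableSet_Ioi)
    filter_upwards [hae] with p hp
    have hp' : 0 < p.2 := hp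
    simp only [F, Function.uncurry_def, one_mul, Real.norm_eq_abs, abs_mul]
    exact mul_le_mul_of_nonneg_left (hbound p.1 p.2 hp') (abs_nonneg _)
  have hinner : ∀ t ∈ Ioi (0:ℝ), ∫ θ, F θ t ∂(sphereMeasure n) = f t := by
    intro t ht
    have ht' : 0 < t := ht
    simp only [F, f]
    rw [integral_const_mul]
    congr 1
    have hpos : ∀ j, 0 < 1 + t * γ j := fun j => by have := hγ j; positivity
    have heq : ∀ θ : Metric.sphere (0 : EuclideanSpace ℝ (Fin n)) 1,
        1 + t * qf T γ θ = qf T (fun j => 1 + t * γ j) θ := by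
      intro θ
      rw [qf_one_add]; simp
    rw [integral_sub _ (integrable_const _), integral_const, smul_eq_mul]
    · congr 1
      simp_rw [heq]
      exact sphere_formula T hn hpos
    · have hcont : Continuous fun θ : Metric.sphere (0 : EuclideanSpace ℝ (Fin n)) 1 =>
          (1 + t * qf T γ θ) ^ (-((n:ℝ) / 2)) := by
        refine Continuous.rpow_const (by fun_prop) fun θ => Or.inl ?_
        have := hqp θ
        positivity
      exact hcont.integrable_of_hasCompactSupport (HasCompactSupport.of_compactSpace _)
  constructor
  · have := hFint.integral_prod_right
    refine (integrable_congr ?_).1 this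
    filter_upwards [ae_restrict_mem measurableSet_Ioi] with t ht
    exact hinner t ht
  · rw [← setIntegral_congr_fun measurableSet_Ioi hinner, ← integral_integral_swap hFint,
      ← integral_mul_const]
    congr 1; funext θ
    exact kernel_scaled_integral (hqp θ)
/-- The polynomial `∏ (1 + γ_j X)`. -/
noncomputable def ellPoly {n : ℕ} (γ : Fin n → ℝ) : Polynomial ℝ :=
  ∏ j, (Polynomial.C (γ j) * Polynomial.X + Polynomial.C 1)

lemma ellPoly_eval {n : ℕ} (γ : Fin n → ℝ) (t : ℝ) :
    (ellPoly γ).eval t = ∏ j, (1 + t * γ j) := by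
  simp only [ellPoly, Polynomial.eval_prod]
  refine Finset.prod_congr rfl fun j _ => ?_
  simp; ring

lemma ellPoly_natDegree_le {n : ℕ} (γ : Fin n → ℝ) : (ellPoly γ).natDegree ≤ n := by
  refine (Polynomial.natDegree_prod_le _ _).trans ?_
  calc _ ≤ ∑ j : Fin n, 1 := Finset.sum_le_sum fun j _ => by
        compute_degree
    _ = n := by simp

lemma ellPoly_coeff {n : ℕ} (γ : Fin n → ℝ) : (ellPoly γ).coeff n = ∏ j, γ j := by
  have := Polynomial.coeff_prod_of_natDegree_le (s := Finset.univ)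
    (fun j : Fin n => (Polynomial.C (γ j) * Polynomial.X + Polynomial.C 1)) 1
    (fun j _ => by compute_degree)
  simp only [Finset.card_univ, Fintype.card_fin, mul_one] at this
  rw [ellPoly, this]
  refine Finset.prod_congr rfl fun j _ => ?_
  simp [Polynomial.coeff_one]

lemma ellPoly_perm {n : ℕ} {α β : Fin n → ℝ} (hα : ∀ j, 0 < α j) (hβ : ∀ j, 0 < β j)
    (h : ellPoly α = ellPoly β) : ∃ σ : Equiv.Perm (Fin n), ∀ j, β j = α (σ j) := by
  have hroots : ∀ {γ : Fin n → ℝ}, (∀ j, 0 < γ j) →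
      (ellPoly γ).roots = Multiset.map (fun j => -(γ j)⁻¹) Finset.univ.val := by
    intro γ hγ
    rw [ellPoly, Polynomial.roots_prod]
    · simp_rw [fun j => Polynomial.roots_C_mul_X_add_C (a := γ j) 1 (hγ j).ne', mul_one]
      simp
    · rw [Finset.prod_ne_zero_iff]
      intro j _ h0
      have := congrArg (fun p => Polynomial.eval 0 p) h0
      simp at this
  have h1 : Multiset.map β Finset.univ.val = Multiset.map α Finset.univ.val := by
    have h2 := congrArg (fun p => Multiset.map (fun x : ℝ => -x⁻¹) p.roots) h
    simp only [hroots hα, hroots hβ, Multiset.map_map, Function.comp_def] at h2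
    simpa [inv_neg] using h2.symm
  have hcard : ∀ x : ℝ, Fintype.card {j // β j = x} = Fintype.card {j // α j = x} := by
    intro x
    have := congrArg (Multiset.count x) h1
    rw [Multiset.count_map, Multiset.count_map] at this
    rw [Fintype.card_subtype, Fintype.card_subtype]
    simp only [eq_comm (a := x)] at this
    exact this
  let e : Fin n ≃ Fin n := (Equiv.sigmaFiberEquiv β).symm.trans
    ((Equiv.sigmaCongrRight fun x => Fintype.equivOfCardEq (hcard x)).trans
      (Equiv.sigmaFiberEquiv α))
  refine ⟨e, fun j => ?_⟩
  have : α (e j) = β j := by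
    simp only [e, Equiv.trans_apply]
    exact (Fintype.equivOfCardEq (hcard (β j)) ⟨j, rfl⟩).2
  exact this.symm

lemma core {n : ℕ} (hn : 2 ≤ n) {α β : Fin n → ℝ} (hα : ∀ j, 0 < α j) (hβ : ∀ j, 0 < β j)
    (m : ℕ) (hmn : m ≤ n) (s : Fin m → ℝ) (hs : Function.Injective s)
    (hs1 : ∀ k, -1 < s k) (hs2 : ∀ k, s k < (n:ℝ) / 2)
    (h0 : ∀ k, ∫ t in Ioi (0:ℝ), t ^ (s k - 1) *
      ((√(∏ j, (1 + t * α j)))⁻¹ - (√(∏ j, (1 + t * β j)))⁻¹) = 0)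
    (hdeg : (ellPoly β - ellPoly α).natDegree ≤ m) : ellPoly α = ellPoly β := by
  set D := ellPoly β - ellPoly α with hD
  set q := D.divX with hq
  have hD0 : D.coeff 0 = 0 := by
    rw [Polynomial.coeff_zero_eq_eval_zero, hD, Polynomial.eval_sub, ellPoly_eval, ellPoly_eval]
    simp
  have hDq : D = q * Polynomial.X := by
    have := Polynomial.divX_mul_X_add D
    rw [hD0] at this
    simpa using this.symm
  have hqd : q.degree < m := by
    rw [Polynomial.degree_lt_iff_coeff_zero]
    intro j hj
    rw [hq, Polynomial.coeff_divX]
    exact Polynomial.coeff_eq_zero_of_natDegree_lt (by omega)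
  let A : (Fin n → ℝ) → ℝ → ℝ := fun γ t => √(∏ j, (1 + t * γ j))
  have hA1 : ∀ {γ : Fin n → ℝ}, (∀ j, 0 < γ j) → ∀ t, 0 < t → 1 ≤ A γ t := by
    intro γ hγ t ht
    rw [Real.one_le_sqrt]
    have h1 : ∏ j : Fin n, (1:ℝ) ≤ ∏ j, (1 + t * γ j) :=
      Finset.prod_le_prod (fun j _ => zero_le_one) fun j _ => by
        have := mul_pos ht (hγ j)
        linarith
    simpa using h1
  have hA2 : ∀ {γ : Fin n → ℝ}, (∀ j, 0 < γ j) → ∀ t, 0 < t →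
      √(∏ j, γ j) * t ^ ((n:ℝ) / 2) ≤ A γ t := by
    intro γ hγ t ht
    have h1 : t ^ ((n:ℝ) / 2) = √(t ^ n) := by
      rw [Real.sqrt_eq_rpow, ← Real.rpow_natCast, ← Real.rpow_mul ht.le]
      congr 1; ring
    rw [h1, ← Real.sqrt_mul (Finset.prod_nonneg fun j _ => (hγ j).le)]
    refine Real.sqrt_le_sqrt ?_
    have h2 : (∏ j, γ j) * t ^ n = ∏ j, (t * γ j) := by
      rw [Finset.prod_mul_distrib]; simp [mul_comm]
    rw [h2]
    refine Finset.prod_le_prod (fun j _ => (mul_pos ht (hγ j)).le) fun j _ => by linarith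
  have hAm : ∀ γ, Measurable (A γ) := by
    intro γ
    simp only [A]
    fun_prop
  let w : ℝ → ℝ := fun t => (A α t * A β t * (A α t + A β t))⁻¹
  have hw : ∀ t, 0 < t → 0 < w t := by
    intro t ht
    have h1 := hA1 hα t ht
    have h2 := hA1 hβ t ht
    simp only [w]
    positivity
  have hq0 : q = 0 := by
    refine cheb m s hs w hw ?_ q hqd ?_
    · intro k j hj
      set ca := √(∏ j, α j) with hca
      set cb := √(∏ j, β j) with hcb
      have hca0 : 0 < ca := Real.sqrt_pos.2 (Finset.prod_pos fun j _ => hα j)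
      have hcb0 : 0 < cb := Real.sqrt_pos.2 (Finset.prod_pos fun j _ => hβ j)
      have hjn : (j:ℝ) ≤ (n:ℝ) - 1 := by
        have : j + 1 ≤ n := by omega
        have : ((j + 1 : ℕ) : ℝ) ≤ n := by exact_mod_cast this
        push_cast at this; linarith
      refine integrableOn_of_bounds (p := s k) (q := s k + j - 3 * ((n:ℝ) / 2)) (K := 1)
        (L := (ca * cb * (ca + cb))⁻¹) ?_ (hs1 k) (by have := hs2 k; linarith) ?_ ?_
      · have h1 := hAm α
        have h2 := hAm β
        refine Measurable.aestronglyMeasurable ?_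
        simp only [w]
        fun_prop
      · intro t ht ht1
        have h1 := hA1 hα t ht
        have h2 := hA1 hβ t ht
        have hw0 := hw t ht
        rw [abs_of_nonneg (by positivity), one_mul, mul_assoc]
        refine mul_le_of_le_one_right (by positivity) ?_
        refine mul_le_one₀ (pow_le_one₀ ht.le ht1) hw0.le ?_
        refine inv_le_one_of_one_le₀ ?_
        have h3 : 1 ≤ A α t * A β t := one_le_mul_of_one_le_of_one_le h1 h2
        exact one_le_mul_of_one_le_of_one_le h3 (by linarith)
      · intro t ht1
        have ht : 0 < t := by linarith
        have h1 := hA2 hα t ht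
        have h2 := hA2 hβ t ht
        have hw0 := hw t ht
        rw [abs_of_nonneg (by positivity)]
        have hT : 0 < t ^ ((n:ℝ) / 2) := by positivity
        have e1 : t ^ (s k + j - 3 * ((n:ℝ) / 2)) =
            t ^ s k * t ^ j * ((t ^ ((n:ℝ) / 2)) ^ 3)⁻¹ := by
          rw [sub_eq_add_neg, Real.rpow_add ht, Real.rpow_add ht, Real.rpow_natCast,
            Real.rpow_neg ht.le, mul_comm (3:ℝ), Real.rpow_mul ht.le]
          norm_cast
        rw [e1]
        have e2 : w t ≤ (ca * cb * (ca + cb))⁻¹ * ((t ^ ((n:ℝ) / 2)) ^ 3)⁻¹ := by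
          rw [← mul_inv]
          refine inv_anti₀ (by positivity) ?_
          calc _ = (ca * t ^ ((n:ℝ) / 2)) * (cb * t ^ ((n:ℝ) / 2)) *
                (ca * t ^ ((n:ℝ) / 2) + cb * t ^ ((n:ℝ) / 2)) := by ring
            _ ≤ _ := by gcongr
        calc _ ≤ t ^ s k * t ^ j * ((ca * cb * (ca + cb))⁻¹ * ((t ^ ((n:ℝ) / 2)) ^ 3)⁻¹) :=
              mul_le_mul_of_nonneg_left e2 (by positivity)
          _ = _ := by ring
    · intro k
      refine Eq.trans ?_ (h0 k)
      refine setIntegral_congr_fun measurableSet_Ioi fun t ht => ?_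
      have ht' : 0 < t := ht
      have h1 := hA1 hα t ht
      have h2 := hA1 hβ t ht
      have hpa : (A α t) ^ 2 = (ellPoly α).eval t := by
        rw [ellPoly_eval, Real.sq_sqrt]
        exact Finset.prod_nonneg fun j _ => by have := hα j; positivity
      have hpb : (A β t) ^ 2 = (ellPoly β).eval t := by
        rw [ellPoly_eval, Real.sq_sqrt]
        exact Finset.prod_nonneg fun j _ => by have := hβ j; positivity
      have hd : q.eval t * t = (A β t) ^ 2 - (A α t) ^ 2 := by
        rw [hpa, hpb, ← Polynomial.eval_sub, ← hD, hDq]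
        simp
      change t ^ s k * q.eval t * w t = t ^ (s k - 1) * ((A α t)⁻¹ - (A β t)⁻¹)
      have h3 : t ^ s k = t ^ (s k - 1) * t := by
        conv_rhs => rw [← Real.rpow_add_one ht'.ne']
        congr 1; ring
      rw [h3, show t ^ (s k - 1) * t * q.eval t * w t = t ^ (s k - 1) * ((q.eval t * t) * w t) by
        ring, hd]
      congr 1
      simp only [w]
      have ha0 : A α t ≠ 0 := by positivity
      have hb0 : A β t ≠ 0 := by positivity
      have hab : A α t + A β t ≠ 0 := by positivity
      field_simp
      ring
  have : D = 0 := by rw [hDq, hq0, zero_mul]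
  exact (sub_eq_zero.1 this).symm

lemma diff_zero {n : ℕ} (hn : 2 ≤ n)
    (T₁ T₂ : EuclideanSpace ℝ (Fin n) ≃ₗᵢ[ℝ] EuclideanSpace ℝ (Fin n))
    {α β : Fin n → ℝ} (hα : ∀ j, 0 < α j) (hβ : ∀ j, 0 < β j) {s : ℝ}
    (hs0 : s ≠ 0) (hs1 : -1 < s) (hs2 : s < (n:ℝ) / 2)
    (h : (∫ θ : Metric.sphere (0 : EuclideanSpace ℝ (Fin n)) 1,
        qf T₁ α θ ^ (-s) ∂(sphereMeasure n)) =
      ∫ θ : Metric.sphere (0 : EuclideanSpace ℝ (Fin n)) 1,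
        qf T₂ β θ ^ (-s) ∂(sphereMeasure n)) :
    ∫ t in Ioi (0:ℝ), t ^ (s - 1) *
      ((√(∏ j, (1 + t * α j)))⁻¹ - (√(∏ j, (1 + t * β j)))⁻¹) = 0 := by
  obtain ⟨δ, hδ⟩ : ∃ δ, Adm n s δ := by
    rcases lt_or_gt_of_ne hs0 with h | h
    · exact ⟨1, Or.inr ⟨hs1, h, rfl⟩⟩
    · exact ⟨0, Or.inl ⟨h, hs2, rfl⟩⟩
  obtain ⟨i1, e1⟩ := mellin_ell hn T₁ hα hδ
  obtain ⟨i2, e2⟩ := mellin_ell hn T₂ hβ hδ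
  have hn0 : (0:ℝ) < (n:ℝ) / 2 := by
    have : (0:ℝ) < n := by exact_mod_cast (by omega : 0 < n)
    positivity
  have hc : 0 < (√π) ^ n / (1 / 2 * Gamma ((n:ℝ) / 2)) := by
    have := Gamma_pos_of_pos hn0
    have := pi_pos
    positivity
  have hsub := integral_sub i1 i2
  rw [e1, e2, h, sub_self] at hsub
  refine (mul_eq_zero.1 (?_ : (√π) ^ n / (1 / 2 * Gamma ((n:ℝ) / 2)) * _ = 0)).resolve_left hc.ne'
  rw [← integral_const_mul]
  refine Eq.trans ?_ hsub
  congr 1; funext t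
  ring

lemma dual_eq {n : ℕ} (hn : 2 ≤ n)
    (T : EuclideanSpace ℝ (Fin n) ≃ₗᵢ[ℝ] EuclideanSpace ℝ (Fin n))
    {a : Fin n → ℝ} (ha : ∀ j, 0 < a j) (i : ℝ) :
    dualVolume n i (T '' ellipsoidSet a) = (1 / n) *
      ∫ θ : Metric.sphere (0 : EuclideanSpace ℝ (Fin n)) 1,
        qf T (fun j => ((a j) ^ 2)⁻¹) θ ^ (-(i / 2)) ∂(sphereMeasure n) := by
  unfold dualVolume
  congr 2; funext θ
  exact radial_rpow T ha i (sphere_ne_zero θ)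

/-- Two centered ellipsoids in `ℝⁿ`, `n ≥ 2`, with equal dual volumes `Ṽ_{i_1}, …, Ṽ_{i_n}`
for `n` distinct nonzero real indices in `(-2, n]` are congruent; equivalently, their
multisets of semiaxes coincide. -/
theorem dualVolumes_determine_ellipsoid_general_indices
    (n : ℕ) (hn : 2 ≤ n) (a b : Fin n → ℝ)
    (ha : ∀ j, 0 < a j) (hb : ∀ j, 0 < b j)
    (T₁ T₂ : EuclideanSpace ℝ (Fin n) ≃ₗᵢ[ℝ] EuclideanSpace ℝ (Fin n))
    (E₁ E₂ : Set (EuclideanSpace ℝ (Fin n)))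
    (hE₁ : E₁ = T₁ '' ellipsoidSet a) (hE₂ : E₂ = T₂ '' ellipsoidSet b)
    (i : Fin n → ℝ) (hinj : Function.Injective i)
    (hi0 : ∀ k, i k ≠ 0) (hilb : ∀ k, -2 < i k) (hiub : ∀ k, i k ≤ n)
    (h : ∀ k, dualVolume n (i k) E₁ = dualVolume n (i k) E₂) :
    (∃ T : EuclideanSpace ℝ (Fin n) ≃ₗᵢ[ℝ] EuclideanSpace ℝ (Fin n), E₂ = T '' E₁) ∧
      ∃ σ : Equiv.Perm (Fin n), ∀ j, b j = a (σ j) := by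
  subst hE₁ hE₂
  have hn0 : (0:ℝ) < n := by exact_mod_cast (by omega : 0 < n)
  set α : Fin n → ℝ := fun j => ((a j) ^ 2)⁻¹ with hαdef
  set β : Fin n → ℝ := fun j => ((b j) ^ 2)⁻¹ with hβdef
  have hα : ∀ j, 0 < α j := fun j => by have := ha j; positivity
  have hβ : ∀ j, 0 < β j := fun j => by have := hb j; positivity
  have hI : ∀ k, (∫ θ : Metric.sphere (0 : EuclideanSpace ℝ (Fin n)) 1,
        qf T₁ α θ ^ (-(i k / 2)) ∂(sphereMeasure n)) =
      ∫ θ : Metric.sphere (0 : EuclideanSpace ℝ (Fin n)) 1,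
        qf T₂ β θ ^ (-(i k / 2)) ∂(sphereMeasure n) := by
    intro k
    have := h k
    rw [dual_eq hn T₁ ha, dual_eq hn T₂ hb] at this
    exact mul_left_cancel₀ (by positivity) this
  have hdegn : (ellPoly β - ellPoly α).natDegree ≤ n :=
    (Polynomial.natDegree_sub_le _ _).trans
      (max_le (ellPoly_natDegree_le _) (ellPoly_natDegree_le _))
  have hP : ellPoly α = ellPoly β := by
    by_cases hex : ∃ k, i k = n
    · obtain ⟨k₀, hk₀⟩ := hex
      have hprod : ∏ j, α j = ∏ j, β j := by
        have h1 := hI k₀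
        rw [hk₀, sphere_formula T₁ hn hα, sphere_formula T₂ hn hβ] at h1
        have hc : 0 < (√π) ^ n / (1 / 2 * Gamma ((n:ℝ) / 2)) := by
          have := Gamma_pos_of_pos (half_pos hn0)
          have := pi_pos
          positivity
        have h2 := inv_injective (mul_left_cancel₀ hc.ne' h1)
        exact (Real.sqrt_inj (Finset.prod_nonneg fun j _ => (hα j).le)
          (Finset.prod_nonneg fun j _ => (hβ j).le)).1 h2
      obtain ⟨m, rfl⟩ : ∃ m, n = m + 1 := ⟨n - 1, by omega⟩
      have hne : ∀ k, i (k₀.succAbove k) ≠ ((m + 1 : ℕ) : ℝ) := by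
        intro k hk
        exact Fin.succAbove_ne k₀ k (hinj (hk.trans hk₀.symm))
      refine core hn hα hβ m (by omega) (fun k => i (k₀.succAbove k) / 2) ?_ ?_ ?_ ?_ ?_
      · intro k k' hk
        have : i (k₀.succAbove k) = i (k₀.succAbove k') := by
          simp only at hk; linarith
        exact Fin.succAbove_right_injective (hinj this)
      · intro k; have := hilb (k₀.succAbove k); linarith
      · intro k
        have := lt_of_le_of_ne (hiub (k₀.succAbove k)) (hne k)
        linarith
      · intro k
        refine diff_zero hn T₁ T₂ hα hβ (div_ne_zero (hi0 _) two_ne_zero) ?_ ?_ (hI _)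
        · have := hilb (k₀.succAbove k); linarith
        · have := lt_of_le_of_ne (hiub (k₀.succAbove k)) (hne k)
          linarith
      · rw [Polynomial.natDegree_le_iff_coeff_eq_zero]
        intro N hN
        rcases Nat.lt_or_ge (m + 1) N with hlt | hge
        · exact Polynomial.coeff_eq_zero_of_natDegree_lt (lt_of_le_of_lt hdegn hlt)
        · have : N = m + 1 := by omega
          subst this
          rw [Polynomial.coeff_sub, ellPoly_coeff, ellPoly_coeff, hprod, sub_self]
    · push Not at hex
      refine core hn hα hβ n le_rfl (fun k => i k / 2) ?_ ?_ ?_ ?_ hdegn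
      · intro k k' hk
        have : i k = i k' := by
          simp only at hk; linarith
        exact hinj this
      · intro k; have := hilb k; linarith
      · intro k
        have := lt_of_le_of_ne (hiub k) (hex k)
        linarith
      · intro k
        refine diff_zero hn T₁ T₂ hα hβ (div_ne_zero (hi0 _) two_ne_zero) ?_ ?_ (hI _)
        · have := hilb k; linarith
        · have := lt_of_le_of_ne (hiub k) (hex k)
          linarith
  obtain ⟨σ, hσ⟩ := ellPoly_perm hα hβ hP
  have hσ' : ∀ j, b j = a (σ j) := by
    intro j
    have h1 : (b j) ^ 2 = (a (σ j)) ^ 2 := inv_injective (hσ j)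
    exact (pow_left_inj₀ (hb j).le (ha _).le two_ne_zero).1 h1
  refine ⟨?_, σ, hσ'⟩
  let L : EuclideanSpace ℝ (Fin n) ≃ₗᵢ[ℝ] EuclideanSpace ℝ (Fin n) :=
    LinearIsometryEquiv.piLpCongrLeft 2 ℝ ℝ σ
  have hL : ∀ y, y ∈ ellipsoidSet b ↔ L y ∈ ellipsoidSet a := by
    intro y
    simp only [ellipsoidSet, mem_ofPred_eq]
    rw [← Equiv.sum_comp σ (fun j => (L y j) ^ 2 / (a j) ^ 2)]
    have : ∀ j, L y (σ j) = y j := by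
      intro j
      simp [L, LinearIsometryEquiv.piLpCongrLeft_apply, Equiv.piCongrLeft']
    simp_rw [this, hσ']
  refine ⟨T₁.symm.trans (L.symm.trans T₂), ?_⟩
  ext x
  constructor
  · rintro ⟨y, hy, rfl⟩
    exact ⟨T₁ (L y), ⟨L y, (hL y).1 hy, rfl⟩, by simp⟩
  · rintro ⟨_, ⟨z, hz, rfl⟩, rfl⟩
    exact ⟨L.symm z, (hL _).2 (by simpa using hz), by simp⟩
end

section
/- Let n ≥ 4 be even and let 1 ≤ k ≤ n−1 with k ≠ n/2. For t > 0 and 1 ≤ m ≤ n−1 define J_m(t) = t^m · ∫_{S^{n-1}} ( t^{−2n}(θ₁² + ⋯ + θ_m²) + θ_{m+1}² + ⋯ + θₙ² )^{1/2} dθ (spherical Lebesgue measure). If a, b > 0 satisfy J_{n/2}(a) = J_{n/2}(b) and J_k(a) = J_k(b), then a = b. (Equivalently: when n is even, the intrinsic volumes Vₙ, V_{n/2}, and V_k, for any k different from n and n/2, uniquely determine an ellipsoid of revolution in ℝⁿ up to an isometry.) -/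
open MeasureTheory Real Set

/-- Polar coordinates for the Gaussian integral of the square root of a diagonal quadratic form. -/
lemma sphere_gauss (n : ℕ) (w : Fin n → ℝ) :
    ∫ x : EuclideanSpace ℝ (Fin n), √(∑ j, w j * x j ^ 2) * rexp (-∑ j, x j ^ 2) =
    (∫ θ : Metric.sphere (0 : EuclideanSpace ℝ (Fin n)) 1, √(∑ j, w j * (θ : EuclideanSpace ℝ (Fin n)) j ^ 2) ∂(sphereMeasure n)) *
    ∫ r : Ioi (0:ℝ), (r:ℝ) * rexp (-(r:ℝ)^2) ∂(Measure.volumeIoiPow (Module.finrank ℝ (EuclideanSpace ℝ (Fin n)) - 1)) := by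
  rcases Nat.eq_zero_or_pos n with rfl | hn
  · simp
  have : Nonempty (Fin n) := ⟨⟨0, hn⟩⟩
  rw [sphereMeasure, ← integral_prod_mul]
  rw [← (Measure.measurePreserving_homeomorphUnitSphereProd (volume : Measure (EuclideanSpace ℝ (Fin n)))).integral_comp (Homeomorph.measurableEmbedding _)]
  have h0 : (volume : Measure (EuclideanSpace ℝ (Fin n))) = volume.restrict ({0}ᶜ) :=
    (restrict_compl_singleton 0).symm
  rw [h0, ← integral_subtype_comap (measurableSet_singleton _).compl]
  rw [← h0]
  refine integral_congr_ae (Filter.Eventually.of_forall fun x => ?_)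
  have hx : (x : EuclideanSpace ℝ (Fin n)) ≠ 0 := x.2
  have hp : 0 < ‖(x : EuclideanSpace ℝ (Fin n))‖ := norm_pos_iff.2 hx
  have hs : ∑ j, (x : EuclideanSpace ℝ (Fin n)) j ^ 2 = ‖(x : EuclideanSpace ℝ (Fin n))‖ ^ 2 := by
    rw [EuclideanSpace.norm_sq_eq]; simp
  simp only [homeomorphUnitSphereProd_apply_fst_coe, homeomorphUnitSphereProd_apply_snd_coe, hs,
    PiLp.smul_apply, smul_eq_mul]
  rw [← mul_assoc]
  congr 1
  rw [← Real.sqrt_sq hp.le]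
  rw [← Real.sqrt_mul' _ (by positivity)]
  rw [Real.sqrt_sq hp.le, Finset.sum_mul]
  congr 1
  refine Finset.sum_congr rfl fun j _ => ?_
  field_simp

lemma kernel_integrable_s19 : IntegrableOn (fun u : ℝ => u ^ (-3/2 : ℝ) * (1 - rexp (-u))) (Ioi 0) := by
  have hc : ContinuousOn (fun u : ℝ => u ^ (-3/2 : ℝ) * (1 - rexp (-u))) (Ioi 0) := by
    refine ContinuousOn.mul (fun u hu => ?_) (by fun_prop)
    exact (Real.continuousAt_rpow_const _ _ (Or.inl (ne_of_gt hu))).continuousWithinAt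
  rw [← Ioc_union_Ioi_eq_Ioi (zero_le_one (α := ℝ))]
  refine IntegrableOn.union ?_ ?_
  · have h : IntegrableOn (fun u : ℝ => u ^ (-1/2 : ℝ)) (Ioc 0 1) :=
      (intervalIntegral.intervalIntegrable_rpow' (by norm_num)).1
    refine Integrable.mono' h ((hc.mono Ioc_subset_Ioi_self).aestronglyMeasurable measurableSet_Ioc) ?_
    filter_upwards [ae_restrict_mem measurableSet_Ioc] with u hu
    have h1 : 0 ≤ 1 - rexp (-u) := by
      have := Real.exp_le_one_iff.2 (by linarith [hu.1] : -u ≤ 0); linarith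
    have h2 : 1 - rexp (-u) ≤ u := by have := Real.add_one_le_exp (-u); linarith
    have h3 : 0 ≤ u ^ (-3/2 : ℝ) := Real.rpow_nonneg hu.1.le _
    rw [Real.norm_of_nonneg (mul_nonneg h3 h1)]
    calc _ ≤ u ^ (-3/2 : ℝ) * u := by gcongr
      _ = u ^ (-1/2 : ℝ) := by
        rw [← Real.rpow_add_one hu.1.ne']; norm_num
  · have h : IntegrableOn (fun u : ℝ => u ^ (-3/2 : ℝ)) (Ioi 1) :=
      integrableOn_Ioi_rpow_of_lt (by norm_num) one_pos
    refine Integrable.mono' h ((hc.mono (Ioi_subset_Ioi zero_le_one)).aestronglyMeasurable measurableSet_Ioi) ?_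
    filter_upwards [ae_restrict_mem measurableSet_Ioi] with u hu
    have hu' : (1:ℝ) < u := hu
    have h1 : 0 ≤ 1 - rexp (-u) := by
      have := Real.exp_le_one_iff.2 (by linarith : -u ≤ 0); linarith
    have h2 : 1 - rexp (-u) ≤ 1 := by have := Real.exp_pos (-u); linarith
    have h3 : 0 ≤ u ^ (-3/2 : ℝ) := Real.rpow_nonneg (by linarith) _
    rw [Real.norm_of_nonneg (mul_nonneg h3 h1)]
    exact mul_le_of_le_one_right h3 h2

lemma kernel_scale_aux (A : ℝ) (hA : 0 < A) (u : ℝ) (hu : 0 < u) :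
    u ^ (-3/2 : ℝ) * (1 - rexp (-(u * A))) =
      A ^ (3/2 : ℝ) * ((A * u) ^ (-3/2 : ℝ) * (1 - rexp (-(A * u)))) := by
  rw [Real.mul_rpow hA.le hu.le, mul_comm u A]
  have : A ^ (3/2 : ℝ) * A ^ (-3/2 : ℝ) = 1 := by
    rw [← Real.rpow_add hA]; norm_num
  linear_combination (-(u ^ (-3/2 : ℝ) * (1 - rexp (-(A * u))))) * this

lemma kernel_integrable_scale (A : ℝ) (hA : 0 ≤ A) :
    IntegrableOn (fun u : ℝ => u ^ (-3/2 : ℝ) * (1 - rexp (-(u * A)))) (Ioi 0) := by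
  rcases hA.eq_or_lt with rfl | hA
  · simp
  have h := (integrableOn_Ioi_comp_mul_left_iff (fun u : ℝ => u ^ (-3/2 : ℝ) * (1 - rexp (-u))) 0 hA).2
    (by simpa using kernel_integrable_s19)
  refine IntegrableOn.congr_fun (h.const_mul (A ^ (3/2 : ℝ))) (fun u hu => ?_) measurableSet_Ioi
  exact (kernel_scale_aux A hA u hu).symm

lemma kernel_integral (A : ℝ) (hA : 0 ≤ A) :
    ∫ u in Ioi (0:ℝ), u ^ (-3/2 : ℝ) * (1 - rexp (-(u * A))) =
      √A * ∫ u in Ioi (0:ℝ), u ^ (-3/2 : ℝ) * (1 - rexp (-u)) := by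
  rcases hA.eq_or_lt with rfl | hA
  · simp
  rw [setIntegral_congr_fun measurableSet_Ioi (fun u hu => kernel_scale_aux A hA u hu)]
  rw [integral_const_mul, integral_comp_mul_left_Ioi (fun u : ℝ => u ^ (-3/2 : ℝ) * (1 - rexp (-u))) 0 hA]
  rw [mul_zero, smul_eq_mul, ← mul_assoc]
  congr 1
  rw [← Real.rpow_neg_one, ← Real.rpow_add hA, Real.sqrt_eq_rpow]
  norm_num

lemma gauss_integrable_s19 (n : ℕ) (c : Fin n → ℝ) (hc : ∀ j, 0 < c j) :
    Integrable (fun x : Fin n → ℝ => rexp (-∑ j, c j * x j ^ 2)) := by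
  have := Integrable.fintype_prod (f := fun (j : Fin n) (x : ℝ) => rexp (-c j * x ^ 2)) (μ := fun _ => volume)
    (fun j => integrable_exp_neg_mul_sq (hc j))
  refine this.congr (Filter.Eventually.of_forall fun x => ?_)
  simp only [← Real.exp_sum, ← Finset.sum_neg_distrib, neg_mul]

lemma gauss_integral_s19 (n : ℕ) (c : Fin n → ℝ) (hc : ∀ j, 0 < c j) :
    ∫ x : Fin n → ℝ, rexp (-∑ j, c j * x j ^ 2) = √π ^ n * (√(∏ j, c j))⁻¹ := by
  have := integral_fintype_prod_volume_eq_prod (fun (j : Fin n) (x : ℝ) => rexp (-c j * x ^ 2))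
  simp only [← Real.exp_sum, neg_mul] at this
  simp only [← Finset.sum_neg_distrib, this]
  simp only [← neg_mul, integral_gaussian]
  have h : ∀ j, √(π / c j) = √π * (√(c j))⁻¹ := fun j => by
    rw [Real.sqrt_div Real.pi_pos.le, div_eq_mul_inv]
  rw [Real.sqrt_prod _ (fun j _ => (hc j).le)]
  simp only [h, Finset.prod_mul_distrib, Finset.prod_const, Finset.card_univ, Fintype.card_fin,
    Finset.prod_inv_distrib]

/-- the one-dimensional kernel -/
lemma G_integrable (n : ℕ) (w : Fin n → ℝ) (hw : ∀ j, 0 < w j) :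
    IntegrableOn (fun u : ℝ => u ^ (-3/2 : ℝ) * (1 - (√(∏ j, (1 + u * w j)))⁻¹)) (Ioi 0) := by
  refine Integrable.mono' (kernel_integrable_scale ((∑ j, w j) / 2)
    (div_nonneg (Finset.sum_nonneg fun j _ => (hw j).le) (by norm_num))) ?_ ?_
  · exact (Measurable.mul (by fun_prop) (by fun_prop)).aestronglyMeasurable
  filter_upwards [ae_restrict_mem measurableSet_Ioi] with u hu
  have hu : 0 < u := hu
  have h3 : 0 ≤ u ^ (-3/2 : ℝ) := Real.rpow_nonneg hu.le _
  have h4 : 1 ≤ ∏ j, (1 + u * w j) := by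
    have hone : ∏ _j : Fin n, (1:ℝ) = 1 := Finset.prod_const_one
    refine hone.symm.le.trans ?_
    refine Finset.prod_le_prod (fun j _ => zero_le_one) (fun j _ => ?_)
    have := mul_pos hu (hw j); linarith
  have h5 : 1 ≤ √(∏ j, (1 + u * w j)) := Real.one_le_sqrt.2 h4
  have h6 : (√(∏ j, (1 + u * w j)))⁻¹ ≤ 1 := inv_le_one_of_one_le₀ h5
  rw [Real.norm_of_nonneg (mul_nonneg h3 (by linarith))]
  have h7 : ∏ j, (1 + u * w j) ≤ rexp (u * ∑ j, w j) := by
    rw [Finset.mul_sum, Real.exp_sum]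
    refine Finset.prod_le_prod (fun j _ => ?_) (fun j _ => ?_)
    · have := mul_pos hu (hw j); linarith
    · have := Real.add_one_le_exp (u * w j); linarith
  have h8 : √(∏ j, (1 + u * w j)) ≤ rexp (u * ((∑ j, w j) / 2)) := by
    apply Real.sqrt_le_iff.2 ⟨(Real.exp_pos _).le, h7.trans_eq _⟩
    rw [← Real.exp_nat_mul]; push_cast; congr 1; ring
  have h9 : rexp (-(u * ((∑ j, w j) / 2))) ≤ (√(∏ j, (1 + u * w j)))⁻¹ := by
    rw [Real.exp_neg]; exact inv_anti₀ (by linarith) h8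
  gcongr

lemma gauss_inner (n : ℕ) (w : Fin n → ℝ) (hw : ∀ j, 0 < w j) (u : ℝ) (hu : 0 < u) :
    Integrable (fun x : Fin n → ℝ => u ^ (-3/2 : ℝ) * (1 - rexp (-(u * ∑ j, w j * x j ^ 2))) * rexp (-∑ j, x j ^ 2)) ∧
    ∫ x : Fin n → ℝ, u ^ (-3/2 : ℝ) * (1 - rexp (-(u * ∑ j, w j * x j ^ 2))) * rexp (-∑ j, x j ^ 2)
     = √π ^ n * (u ^ (-3/2 : ℝ) * (1 - (√(∏ j, (1 + u * w j)))⁻¹)) := by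
  have hc : ∀ j, 0 < 1 + u * w j := fun j => by have := mul_pos hu (hw j); linarith
  have i1 := gauss_integrable_s19 n (fun _ => 1) (fun _ => one_pos)
  have i2 := gauss_integrable_s19 n _ hc
  have e1 := gauss_integral_s19 n (fun _ => 1) (fun _ => one_pos)
  have e2 := gauss_integral_s19 n _ hc
  have he : (fun x : Fin n → ℝ => u ^ (-3/2 : ℝ) * (1 - rexp (-(u * ∑ j, w j * x j ^ 2))) * rexp (-∑ j, x j ^ 2))
      = fun x => u ^ (-3/2 : ℝ) * (rexp (-∑ j, (1:ℝ) * x j ^ 2) - rexp (-∑ j, (1 + u * w j) * x j ^ 2)) := by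
    funext x
    have : rexp (-∑ j, (1 + u * w j) * x j ^ 2) = rexp (-(u * ∑ j, w j * x j ^ 2)) * rexp (-∑ j, x j ^ 2) := by
      rw [← Real.exp_add]
      congr 1
      simp only [add_mul, Finset.sum_add_distrib, Finset.mul_sum, mul_assoc, one_mul]
      ring
    rw [this]
    simp only [one_mul]
    ring
  rw [he]
  refine ⟨(i1.sub i2).const_mul _, ?_⟩
  rw [integral_const_mul, integral_sub i1 i2, e1, e2]
  simp
  ring

lemma gauss_formula (n : ℕ) (w : Fin n → ℝ) (hw : ∀ j, 0 < w j) :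
    (∫ x : EuclideanSpace ℝ (Fin n), √(∑ j, w j * x j ^ 2) * rexp (-∑ j, x j ^ 2)) *
      (∫ u in Ioi (0:ℝ), u ^ (-3/2 : ℝ) * (1 - rexp (-u))) =
    √π ^ n * ∫ u in Ioi (0:ℝ), u ^ (-3/2 : ℝ) * (1 - (√(∏ j, (1 + u * w j)))⁻¹) := by
  have h0 := (PiLp.volume_preserving_ofLp (Fin n)).integral_comp
    (MeasurableEquiv.toLp 2 (Fin n → ℝ)).symm.measurableEmbedding
    (fun x : Fin n → ℝ => √(∑ j, w j * x j ^ 2) * rexp (-∑ j, x j ^ 2))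
  rw [h0, ← integral_mul_const]
  have h1 : ∀ x : Fin n → ℝ, √(∑ j, w j * x j ^ 2) * rexp (-∑ j, x j ^ 2) *
      (∫ u in Ioi (0:ℝ), u ^ (-3/2 : ℝ) * (1 - rexp (-u))) =
      ∫ u in Ioi (0:ℝ), u ^ (-3/2 : ℝ) * (1 - rexp (-(u * ∑ j, w j * x j ^ 2))) * rexp (-∑ j, x j ^ 2) := by
    intro x
    rw [integral_mul_const, kernel_integral _ (Finset.sum_nonneg fun j _ => mul_nonneg (hw j).le (sq_nonneg _))]
    ring
  simp only [h1]
  rw [integral_integral_swap, ← integral_const_mul]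
  · exact setIntegral_congr_fun measurableSet_Ioi (fun u hu => (gauss_inner n w hw u hu).2)
  · refine (integrable_prod_iff' ?_).2 ⟨?_, ?_⟩
    · apply Measurable.aestronglyMeasurable
      unfold Function.uncurry
      fun_prop
    · filter_upwards [ae_restrict_mem measurableSet_Ioi] with u hu
      exact (gauss_inner n w hw u hu).1
    · refine ((G_integrable n w hw).const_mul (√π ^ n)).congr ?_
      filter_upwards [ae_restrict_mem measurableSet_Ioi] with u hu
      rw [← (gauss_inner n w hw u hu).2]
      refine integral_congr_ae (Filter.Eventually.of_forall fun x => ?_)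
      have hu : 0 < u := hu
      have : 0 ≤ u * ∑ j, w j * x j ^ 2 :=
        mul_nonneg hu.le (Finset.sum_nonneg fun j _ => mul_nonneg (hw j).le (sq_nonneg _))
      have h2 : rexp (-(u * ∑ j, w j * x j ^ 2)) ≤ 1 := Real.exp_le_one_iff.2 (by linarith)
      simp only [Function.uncurry]
      rw [Real.norm_of_nonneg]
      exact mul_nonneg (mul_nonneg (Real.rpow_nonneg hu.le _) (by linarith)) (Real.exp_pos _).le

/-- The product of the one-dimensional factors. -/
noncomputable def Pf (k l : ℕ) (y u : ℝ) : ℝ := (1 + u * (y ^ l)⁻¹) ^ k * (1 + u * y ^ k) ^ l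

lemma Pf_inv (k l : ℕ) (y u : ℝ) : Pf k l y⁻¹ u = Pf l k y u := by
  simp [Pf, mul_comm]

lemma Pf_pos (k l : ℕ) (y u : ℝ) (hy : 0 < y) (hu : 0 < u) : 0 < Pf k l y u := by
  unfold Pf; positivity

lemma Pf_recip (k l : ℕ) (y u : ℝ) (hy : 0 < y) (hu : 0 < u) :
    Pf k l y u⁻¹ * u ^ (k + l) = Pf l k y u := by
  have e1 : (1 + u⁻¹ * (y ^ l)⁻¹) * u = (1 + u * y ^ l) * (y ^ l)⁻¹ := by field_simp; ring
  have e2 : (1 + u⁻¹ * y ^ k) * u = (1 + u * (y ^ k)⁻¹) * y ^ k := by field_simp; ring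
  have e3 : ((y ^ l)⁻¹) ^ k * (y ^ k) ^ l = 1 := by
    rw [← pow_mul, inv_pow, ← pow_mul, mul_comm l k]; field_simp
  unfold Pf
  calc _ = ((1 + u⁻¹ * (y ^ l)⁻¹) * u) ^ k * ((1 + u⁻¹ * y ^ k) * u) ^ l := by
        rw [pow_add, mul_pow, mul_pow]; ring
    _ = ((1 + u * y ^ l) ^ k * (1 + u * (y ^ k)⁻¹) ^ l) * (((y ^ l)⁻¹) ^ k * (y ^ k) ^ l) := by
        rw [e1, e2, mul_pow, mul_pow]; ring
    _ = _ := by rw [e3]; ring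

noncomputable def Kf (k l : ℕ) (y u : ℝ) : ℝ := u ^ (-3/2 : ℝ) * (1 - (√(Pf k l y u))⁻¹)

lemma J_key (k l : ℕ) (t : ℝ) (ht : 0 < t) :
    IntegrableOn (Kf k l (t^2)) (Ioi 0) ∧
    Jfun (k + l) k t * ((∫ r : Ioi (0:ℝ), (r:ℝ) * rexp (-(r:ℝ)^2) ∂(Measure.volumeIoiPow (Module.finrank ℝ (EuclideanSpace ℝ (Fin (k+l))) - 1))) *
      (∫ u in Ioi (0:ℝ), u ^ (-3/2 : ℝ) * (1 - rexp (-u)))) =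
      √π ^ (k + l) * ∫ u in Ioi (0:ℝ), Kf k l (t^2) u := by
  set w : Fin (k + l) → ℝ := fun j => t ^ (2 * k) * (if (j : ℕ) < k then (t ^ (2 * (k + l)))⁻¹ else 1) with hwdef
  have hw : ∀ j, 0 < w j := by
    intro j; simp only [hwdef]; split_ifs <;> positivity
  have hP : ∀ u, ∏ j, (1 + u * w j) = Pf k l (t^2) u := by
    intro u
    rw [Fin.prod_univ_add]
    simp only [hwdef, Fin.val_castAdd, Fin.val_natAdd, Fin.is_lt, if_true]
    simp only [show ∀ x : Fin l, ¬ (k + (x:ℕ) < k) from fun x => by omega, if_false]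
    simp only [Finset.prod_const, Finset.card_univ, Fintype.card_fin, Pf]
    rw [← pow_mul, ← pow_mul, mul_one]
    congr 4
    rw [mul_add, pow_add]
    field_simp
  have hK : (fun u : ℝ => u ^ (-3/2 : ℝ) * (1 - (√(∏ j, (1 + u * w j)))⁻¹)) = Kf k l (t^2) := by
    funext u; rw [hP, Kf]
  have hJ : Jfun (k + l) k t = ∫ θ : Metric.sphere (0 : EuclideanSpace ℝ (Fin (k + l))) 1,
      √(∑ j, w j * (θ : EuclideanSpace ℝ (Fin (k + l))) j ^ 2) ∂(sphereMeasure (k + l)) := by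
    rw [Jfun, ← integral_const_mul]
    refine integral_congr_ae (Filter.Eventually.of_forall fun θ => ?_)
    simp only [hwdef, mul_assoc]
    rw [← Finset.mul_sum, Real.sqrt_mul (by positivity), show t ^ (2 * k) = (t ^ k) ^ 2 by ring, Real.sqrt_sq (by positivity)]
  have := gauss_formula (k + l) w hw
  rw [sphere_gauss, ← hJ] at this
  refine ⟨hK ▸ G_integrable _ w hw, ?_⟩
  rw [← mul_assoc, this, hK]

lemma Kf_integral_eq (k l : ℕ) (a b : ℝ) (ha : 0 < a) (hb : 0 < b)
    (h : Jfun (k + l) k a = Jfun (k + l) k b) :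
    ∫ u in Ioi (0:ℝ), Kf k l (a^2) u = ∫ u in Ioi (0:ℝ), Kf k l (b^2) u := by
  have h1 := (J_key k l a ha).2
  have h2 := (J_key k l b hb).2
  rw [h, h2] at h1
  exact (mul_left_cancel₀ (by positivity) h1).symm

lemma integral_ne_zero_of_pos (f : ℝ → ℝ) (hf : IntegrableOn f (Ioi 0))
    (hp : ∀ u, 0 < u → u ≠ 1 → 0 < f u) : ∫ u in Ioi (0:ℝ), f u ≠ 0 := by
  intro h
  have hae : ∀ᵐ u ∂(volume.restrict (Ioi (0:ℝ))), 0 < f u := by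
    filter_upwards [ae_restrict_mem measurableSet_Ioi, ae_restrict_of_ae (Measure.ae_ne volume (1:ℝ))] with u hu hu1
    exact hp u hu hu1
  have h0 := (integral_eq_zero_iff_of_nonneg_ae (hae.mono fun u hu => hu.le) hf).1 h
  have hF : ∀ᵐ u ∂(volume.restrict (Ioi (0:ℝ))), False := by
    filter_upwards [hae, h0] with u hu h0
    simp only [Pi.zero_apply] at h0
    linarith
  rw [Filter.eventually_false_iff_eq_bot, ae_eq_bot, Measure.restrict_eq_zero] at hF
  simp at hF

lemma h_slope (u : ℝ) (hu : 0 < u) (hu1 : u < 1) (x y : ℝ) (hx : 0 < x) (hxy : x < y) :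
    y * (Real.log (1 + u * rexp x) - Real.log (1 + u * rexp (-x))) <
    x * (Real.log (1 + u * rexp y) - Real.log (1 + u * rexp (-y))) := by
  set h : ℝ → ℝ := fun s => Real.log (1 + u * rexp s) - Real.log (1 + u * rexp (-s)) with hh
  have hd : ∀ s, HasDerivAt h (u * rexp s / (1 + u * rexp s) + u * rexp (-s) / (1 + u * rexp (-s))) s := by
    intro s
    have p1 : 0 < 1 + u * rexp s := by positivity
    have p2 : 0 < 1 + u * rexp (-s) := by positivity
    have d1 := (((Real.hasDerivAt_exp s).const_mul u).const_add 1).log p1.ne'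
    have d2 := ((((hasDerivAt_neg s).exp).const_mul u).const_add 1).log p2.ne'
    refine (d1.sub d2).congr_deriv ?_
    ring
  have hconv : StrictConvexOn ℝ (Ici 0) h := by
    refine StrictMonoOn.strictConvexOn_of_deriv (convex_Ici 0) (fun s _ => (hd s).continuousAt.continuousWithinAt) ?_
    rw [interior_Ici]
    intro p hp q hq hpq
    rw [(hd p).deriv, (hd q).deriv]
    have hE : ∀ s, u * rexp s / (1 + u * rexp s) + u * rexp (-s) / (1 + u * rexp (-s)) =
        1 - (1 - u ^ 2) / (1 + u ^ 2 + u * (rexp s + rexp (-s))) := by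
      intro s
      have p1 : 0 < 1 + u * rexp s := by positivity
      have p2 : 0 < 1 + u * rexp (-s) := by positivity
      have p3 : 0 < 1 + u ^ 2 + u * (rexp s + rexp (-s)) := by positivity
      have e : rexp s * rexp (-s) = 1 := by rw [← Real.exp_add]; simp
      have p4 : (1 + u * rexp s) * (1 + u * rexp (-s)) = 1 + u ^ 2 + u * (rexp s + rexp (-s)) := by
        linear_combination u ^ 2 * e
      rw [div_add_div _ _ p1.ne' p2.ne', p4, eq_sub_iff_add_eq, ← add_div, div_eq_one_iff_eq p3.ne']
      linear_combination (2 * u ^ 2) * e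
    rw [hE, hE]
    have hc : rexp p + rexp (-p) < rexp q + rexp (-q) := by
      have := Real.cosh_lt_cosh.2 (show |p| < |q| by
        rw [abs_of_pos hp, abs_of_pos hq]; exact hpq)
      rw [Real.cosh_eq, Real.cosh_eq] at this
      linarith
    have : 0 < 1 - u ^ 2 := by nlinarith
    have := Real.exp_pos p
    have := Real.exp_pos (-p)
    gcongr
  have := hconv.secant_strict_mono (a := 0) (x := x) (y := y) (by simp) hx.le (hx.trans hxy).le hx.ne' (hx.trans hxy).ne' hxy
  have h0 : h 0 = 0 := by simp [hh]
  rw [h0, sub_zero, sub_zero, sub_zero, sub_zero, div_lt_div_iff₀ hx (hx.trans hxy)] at this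
  simp only [hh] at this
  linarith

lemma Pf_lt (k l : ℕ) (hk : 1 ≤ k) (hkl : k < l) (y u : ℝ) (hy : 1 < y) (hu : 0 < u) (hu1 : u < 1) :
    Pf k l y u < Pf l k y u := by
  have hy0 : 0 < y := by linarith
  rw [← Real.log_lt_log_iff (Pf_pos _ _ _ _ hy0 hu) (Pf_pos _ _ _ _ hy0 hu)]
  have hτ : 0 < Real.log y := Real.log_pos hy
  have hk0 : (0:ℝ) < k := by exact_mod_cast hk
  have hkl' : (k:ℝ) < l := by exact_mod_cast hkl
  have h := h_slope u hu hu1 (k * Real.log y) (l * Real.log y) (by positivity) (by gcongr)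
  have hE : ∀ j : ℕ, rexp (j * Real.log y) = y ^ j := fun j => by
    rw [Real.exp_nat_mul, Real.exp_log hy0]
  simp only [Real.exp_neg, hE] at h
  unfold Pf
  have q1 : 0 < 1 + u * (y ^ l)⁻¹ := by positivity
  have q2 : 0 < 1 + u * y ^ l := by positivity
  have q3 : 0 < 1 + u * (y ^ k)⁻¹ := by positivity
  have q4 : 0 < 1 + u * y ^ k := by positivity
  rw [Real.log_mul (by positivity) (by positivity), Real.log_mul (by positivity) (by positivity)]
  simp only [Real.log_pow]
  have : Real.log y * (l * (Real.log (1 + u * y ^ k) - Real.log (1 + u * (y ^ k)⁻¹))) <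
    Real.log y * (k * (Real.log (1 + u * y ^ l) - Real.log (1 + u * (y ^ l)⁻¹))) := by linarith
  have := lt_of_mul_lt_mul_left this hτ.le
  linarith

lemma main_ineq (k l : ℕ) (hk : 1 ≤ k) (hkl : k < l) (y : ℝ) (hy : 1 < y)
    (i1 : IntegrableOn (Kf k l y) (Ioi 0)) (i2 : IntegrableOn (Kf l k y) (Ioi 0))
    (h : ∫ u in Ioi (0:ℝ), Kf k l y u = ∫ u in Ioi (0:ℝ), Kf l k y u) : False := by
  have hy0 : 0 < y := by linarith
  set d : ℝ → ℝ := fun u => (√(Pf k l y u))⁻¹ - (√(Pf l k y u))⁻¹ with hd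
  set g : ℝ → ℝ := fun u => u ^ (-3/2 : ℝ) * d u with hg
  have hgK : g = fun u => Kf l k y u - Kf k l y u := by
    funext u; simp only [hg, hd, Kf]; ring
  have ig : IntegrableOn g (Ioi 0) := by rw [hgK]; exact i2.sub i1
  have hg0 : ∫ u in Ioi (0:ℝ), g u = 0 := by
    rw [hgK, integral_sub i2 i1, h, sub_self]
  have hdpos : ∀ u, 0 < u → u < 1 → 0 < d u := by
    intro u hu hu1
    have := Pf_lt k l hk hkl y u hy hu hu1
    have p := Pf_pos k l y u hy0 hu
    simp only [hd, sub_pos]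
    exact inv_strictAnti₀ (Real.sqrt_pos.2 p) (Real.sqrt_lt_sqrt p.le this)
  have hrec : ∀ k l : ℕ, ∀ u, 0 < u → (√(Pf k l y u⁻¹))⁻¹ = √(u ^ (k + l)) * (√(Pf l k y u))⁻¹ := by
    intro k l u hu
    rw [← Pf_recip k l y u hy0 hu, Real.sqrt_mul' _ (by positivity)]
    have : 0 < √(u ^ (k + l)) := Real.sqrt_pos.2 (by positivity)
    have : 0 < √(Pf k l y u⁻¹) := Real.sqrt_pos.2 (Pf_pos _ _ _ _ hy0 (by positivity))
    field_simp
  have hdrec : ∀ u, 0 < u → d u⁻¹ = - (√(u ^ (k + l)) * d u) := by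
    intro u hu
    simp only [hd]
    rw [hrec k l u hu, hrec l k u hu, add_comm l k]
    ring
  set g2 : ℝ → ℝ := fun u => -(u ^ (-1/2 : ℝ) * √(u ^ (k + l)) * d u) with hg2
  have hcv : ∀ u ∈ Ioi (0:ℝ), (|(-1:ℝ)| * u ^ ((-1:ℝ) - 1)) • g (u ^ (-1:ℝ)) = g2 u := by
    intro u hu
    have hu : 0 < u := hu
    simp only [hg, hg2, Real.rpow_neg_one, smul_eq_mul, hdrec u hu, abs_neg, abs_one, one_mul]
    rw [← Real.rpow_neg_one u, ← Real.rpow_mul hu.le]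
    have : u ^ ((-1:ℝ) - 1) * u ^ ((-1:ℝ) * (-3/2)) = u ^ (-1/2 : ℝ) := by
      rw [← Real.rpow_add hu]; norm_num
    rw [← this]; ring
  have ig2 : IntegrableOn g2 (Ioi 0) := by
    refine IntegrableOn.congr_fun ((integrableOn_Ioi_comp_rpow_iff g (by norm_num : (-1:ℝ) ≠ 0)).2 ig) hcv measurableSet_Ioi
  have hg20 : ∫ u in Ioi (0:ℝ), g2 u = 0 := by
    rw [← setIntegral_congr_fun measurableSet_Ioi hcv, integral_comp_rpow_Ioi g (by norm_num), hg0]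
  refine integral_ne_zero_of_pos (fun u => g u + g2 u) (ig.add ig2) ?_ (by rw [integral_add ig ig2, hg0, hg20, add_zero])
  intro u hu hu1
  have hfac : g u + g2 u = u ^ (-1/2 : ℝ) * (u⁻¹ - √(u ^ (k + l))) * d u := by
    have : u ^ (-3/2 : ℝ) = u ^ (-1/2 : ℝ) * u⁻¹ := by
      rw [← Real.rpow_neg_one, ← Real.rpow_add hu]; norm_num
    simp only [hg, hg2, this]; ring
  simp only [hfac]
  have hr : 0 < u ^ (-1/2 : ℝ) := Real.rpow_pos_of_pos hu _
  have hn0 : k + l ≠ 0 := by omega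
  rcases lt_or_gt_of_ne hu1 with hlt | hgt
  · have a1 : 1 < u⁻¹ := (one_lt_inv₀ hu).2 hlt
    have a2 : √(u ^ (k + l)) ≤ 1 := Real.sqrt_le_one.2 (pow_le_one₀ hu.le hlt.le)
    exact mul_pos (mul_pos hr (by linarith)) (hdpos u hu hlt)
  · have a1 : u⁻¹ < 1 := inv_lt_one_of_one_lt₀ hgt
    have a2 : 1 ≤ √(u ^ (k + l)) := Real.one_le_sqrt.2 (one_le_pow₀ hgt.le)
    have a3 := hdpos u⁻¹ (by positivity) a1
    rw [hdrec u hu] at a3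
    have a4 : d u < 0 := by
      by_contra hc
      push Not at hc
      have := mul_nonneg (Real.sqrt_nonneg (u ^ (k + l))) hc
      linarith
    exact mul_pos_of_neg_of_neg (mul_neg_of_pos_of_neg hr (by linarith)) a4

lemma not_inv (k l : ℕ) (hk : 1 ≤ k) (hl : 1 ≤ l) (hkl : k ≠ l) (a : ℝ) (ha : 1 < a)
    (h : Jfun (k + l) k a = Jfun (k + l) k a⁻¹) : False := by
  have ha0 : 0 < a := by linarith
  have h1 := Kf_integral_eq k l a a⁻¹ ha0 (by positivity) h
  have i1 := (J_key k l a ha0).1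
  have i2 := (J_key l k a ha0).1
  have hK : Kf k l (a⁻¹ ^ 2) = Kf l k (a ^ 2) := by
    funext u; rw [Kf, Kf, inv_pow, Pf_inv]
  rw [hK] at h1
  have hy : 1 < a ^ 2 := one_lt_pow₀ ha (by norm_num)
  rcases lt_or_gt_of_ne hkl with hc | hc
  · exact main_ineq k l hk hc _ hy i1 i2 h1
  · exact main_ineq l k hl hc _ hy i2 i1 h1.symm

lemma mid_lt (m : ℕ) (hm : 1 ≤ m) (a b : ℝ) (ha : 0 < a) (hb : 0 < b)
    (hlt : (a^2) ^ m + ((a^2) ^ m)⁻¹ < (b^2) ^ m + ((b^2) ^ m)⁻¹)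
    (h : Jfun (m + m) m a = Jfun (m + m) m b) : False := by
  have h1 := Kf_integral_eq m m a b ha hb h
  have i1 := (J_key m m a ha).1
  have i2 := (J_key m m b hb).1
  refine integral_ne_zero_of_pos (fun u => Kf m m (b^2) u - Kf m m (a^2) u) (i2.sub i1) ?_
    (by rw [integral_sub i2 i1, h1, sub_self])
  intro u hu _
  have hP : ∀ t : ℝ, 0 < t → Pf m m (t^2) u = (1 + u ^ 2 + u * ((t^2)^m + ((t^2)^m)⁻¹)) ^ m := by
    intro t ht
    rw [Pf, ← mul_pow]
    congr 1
    have : 0 < (t^2)^m := by positivity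
    field_simp
    ring
  have hlt2 : Pf m m (a^2) u < Pf m m (b^2) u := by
    rw [hP a ha, hP b hb]
    gcongr
  have p := Pf_pos m m (a^2) u (by positivity) hu
  have := inv_strictAnti₀ (Real.sqrt_pos.2 p) (Real.sqrt_lt_sqrt p.le hlt2)
  have hr : 0 < u ^ (-3/2 : ℝ) := Real.rpow_pos_of_pos hu _
  simp only [Kf]
  rw [← mul_sub]
  exact mul_pos hr (by linarith)

lemma mid_eq (m : ℕ) (hm : 1 ≤ m) (a b : ℝ) (ha : 0 < a) (hb : 0 < b)
    (h : Jfun (m + m) m a = Jfun (m + m) m b) : a = b ∨ b = a⁻¹ := by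
  have h1 : (a^2) ^ m + ((a^2) ^ m)⁻¹ = (b^2) ^ m + ((b^2) ^ m)⁻¹ := by
    rcases lt_trichotomy ((a^2) ^ m + ((a^2) ^ m)⁻¹) ((b^2) ^ m + ((b^2) ^ m)⁻¹) with hc | hc | hc
    · exact (mid_lt m hm a b ha hb hc h).elim
    · exact hc
    · exact (mid_lt m hm b a hb ha hc h.symm).elim
  rw [← pow_mul, ← pow_mul] at h1
  have hne : 2 * m ≠ 0 := by omega
  have h2 : (a ^ (2*m) - b ^ (2*m)) * ((a * b) ^ (2 * m) - 1) = 0 := by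
    rw [mul_pow]
    field_simp at h1
    linear_combination h1
  rcases mul_eq_zero.1 h2 with h3 | h3
  · left
    exact (pow_left_inj₀ ha.le hb.le hne).1 (by linarith)
  · right
    have : a * b = 1 := (pow_left_inj₀ (by positivity) zero_le_one hne).1 (by rw [one_pow]; linarith)
    exact eq_inv_of_mul_eq_one_right this

/-- For even `n = 2m ≥ 4`, the intrinsic volumes `Vₙ`, `V_{n/2}` and `V_k`
(`k ≠ n, n/2`) uniquely determine an ellipsoid of revolution: `J_{n/2}(a) = J_{n/2}(b)`
and `J_k(a) = J_k(b)` force `a = b`. -/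
theorem revolution_ellipsoid_unique_even_dim
    (n m : ℕ) (hnm : n = 2 * m) (hn : 4 ≤ n)
    (k : ℕ) (hk1 : 1 ≤ k) (hk2 : k ≤ n - 1) (hkm : k ≠ m)
    (a b : ℝ) (ha : 0 < a) (hb : 0 < b)
    (h1 : Jfun n m a = Jfun n m b)
    (h2 : Jfun n k a = Jfun n k b) :
    a = b := by
  subst hnm
  rw [two_mul] at h1
  rcases mid_eq m (by omega) a b ha hb h1 with h | h
  · exact h
  subst h
  obtain ⟨l, hl⟩ : ∃ l, 2 * m = k + l := ⟨2 * m - k, by omega⟩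
  rw [hl] at h2
  rcases lt_trichotomy a 1 with hc | hc | hc
  · refine (not_inv k l hk1 (by omega) (by omega) a⁻¹ ((one_lt_inv₀ ha).2 hc) ?_).elim
    rw [inv_inv]; exact h2.symm
  · rw [hc, inv_one]
  · exact (not_inv k l hk1 (by omega) (by omega) a hc h2).elim
end
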